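/- arXiv:2103.16666 — 5 statements merged into one kernel-verified Lean document; each statement's English description precedes it below -/
import Mathlib

section
/- Let μ > −3/2 and −1/2 < ν < μ+1. Then for all x > 0, ∫_0^x e^{−u} u^ν t̃_{μ,ν}(u) du = (e^{−x} x^{ν+1}/(2ν+1)) · ( t̃_{μ,ν}(x) + t̃_{μ+1,ν+1}(x) ) − γ(μ+ν+2, x) / (2^μ (2ν+1) Γ((μ−ν+1)/2) Γ((μ+ν+3)/2)). -/
/-!
The identity follows by integrating the Lommel series term by term. Write `p k = μ + ν + 2k + 2` and
let `A k` be the constant with `u ^ ν * (k-th term of t̃_{μ,ν}(u)) = A k * u ^ (p k - 1)`, so the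
integral is `∑ A k * γ(p k, x)`. Applying the recurrence `γ(a+1, x) = a γ(a, x) - x ^ a e ^ {-x}`
twice expresses `γ(p (k+1), x)` through `γ(p k, x)`, and with
`E k = (2k + μ - ν + 1) * A k * γ(p k, x)` one gets
`(2ν+1) A k γ(p k, x) = e^{-x} x^{ν+1} (k-th terms of t̃_{μ,ν}(x) + t̃_{μ+1,ν+1}(x)) - (E k - E (k+1))`.
The last bracket, summed over `k`, telescopes to `E 0`, which is the incomplete gamma term of the formula. Indeed
`γ(a, x) ≤ x ^ a / a` and `ν > -1/2` give `0 ≤ E k ≤ A k * x ^ (p k)`, and the right-hand side tends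
to `0` because it is the general term of a convergent series (ratio test). The same bound on `γ`
justifies exchanging sum and integral.
-/

open Real MeasureTheory

/-- Normalised modified Lommel function of the first kind. -/
noncomputable def lommel (μ ν x : ℝ) : ℝ :=
  ∑' k : ℕ, (x / 2) ^ (μ + 2 * (k : ℝ) + 1) /
    (Real.Gamma ((k : ℝ) + (μ - ν + 3) / 2) * Real.Gamma ((k : ℝ) + (μ + ν + 3) / 2))

/-- Lower incomplete gamma function. -/
noncomputable def lowerGamma (a x : ℝ) : ℝ :=
  ∫ u in (0:ℝ)..x, Real.exp (-u) * u ^ (a - 1)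

/-- The constant `A k` for which `u ^ ν` times the `k`-th term of `lommel μ ν u` equals
`A k * u ^ (μ + ν + 2 * k + 1)`. -/
noncomputable def lommelCoeff (μ ν : ℝ) (k : ℕ) : ℝ :=
  1 / (2 ^ (μ + 2 * (k : ℝ) + 1) *
    (Real.Gamma ((k : ℝ) + (μ - ν + 3) / 2) * Real.Gamma ((k : ℝ) + (μ + ν + 3) / 2)))

theorem intervalIntegrable_exp_neg_mul_rpow {a : ℝ} (ha : 0 < a) (x : ℝ) :
    IntervalIntegrable (fun u : ℝ => Real.exp (-u) * u ^ (a - 1)) volume 0 x :=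
  (intervalIntegral.intervalIntegrable_rpow' (by linarith)).continuousOn_mul
    (f := fun u : ℝ => u ^ (a - 1)) (g := fun u : ℝ => Real.exp (-u)) (by fun_prop)

theorem lowerGamma_nonneg {x : ℝ} (a : ℝ) (hx : 0 < x) : 0 ≤ lowerGamma a x :=
  intervalIntegral.integral_nonneg hx.le fun _ hu =>
    mul_nonneg (Real.exp_pos _).le (Real.rpow_nonneg hu.1 _)

theorem lowerGamma_le {a x : ℝ} (ha : 0 < a) (hx : 0 < x) : lowerGamma a x ≤ x ^ a / a := by
  have h : ∫ u in (0:ℝ)..x, u ^ (a - 1) = x ^ a / a := by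
    rw [integral_rpow (Or.inl (by linarith))]
    simp [Real.zero_rpow ha.ne']
  rw [← h]
  refine intervalIntegral.integral_mono_on hx.le (intervalIntegrable_exp_neg_mul_rpow ha x)
    (intervalIntegral.intervalIntegrable_rpow' (r := a - 1) (by linarith)) fun u hu => ?_
  exact mul_le_of_le_one_left (Real.rpow_nonneg hu.1 _) (Real.exp_le_one_iff.2 (by linarith [hu.1]))

theorem lowerGamma_add_one {a x : ℝ} (ha : 0 < a) (hx : 0 < x) :
    lowerGamma (a + 1) x = a * lowerGamma a x - x ^ a * Real.exp (-x) := by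
  have hi := intervalIntegrable_exp_neg_mul_rpow ha x
  have hi' := intervalIntegrable_exp_neg_mul_rpow (a := a + 1) (by linarith) x
  have hcont : ContinuousOn (fun u : ℝ => u ^ a * Real.exp (-u)) (Set.Icc 0 x) :=
    ((Real.continuous_rpow_const ha.le).mul (by fun_prop)).continuousOn
  have key := intervalIntegral.integral_eq_sub_of_hasDerivAt_of_le hx.le hcont
    (f' := fun u => a * (Real.exp (-u) * u ^ (a - 1)) - Real.exp (-u) * u ^ (a + 1 - 1))
    (fun u hu => by
      have h1 := (Real.hasDerivAt_rpow_const (x := u) (p := a) (Or.inl hu.1.ne')).mul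
        ((hasDerivAt_id u).neg.exp)
      refine h1.congr_deriv ?_
      simp only [id, add_sub_cancel_right, Pi.neg_apply]
      ring)
    ((hi.const_mul a).sub hi')
  rw [intervalIntegral.integral_sub (hi.const_mul a) hi', intervalIntegral.integral_const_mul,
    Real.zero_rpow ha.ne'] at key
  unfold lowerGamma
  linarith

section

variable {μ ν : ℝ}

theorem lommelCoeff_pos (hν1 : -1 / 2 < ν) (hν2 : ν < μ + 1) (k : ℕ) :
    0 < lommelCoeff μ ν k := by
  have hk : (0 : ℝ) ≤ k := k.cast_nonneg
  have h1 : 0 < Real.Gamma ((k : ℝ) + (μ - ν + 3) / 2) := Real.Gamma_pos_of_pos (by linarith)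
  have h2 : 0 < Real.Gamma ((k : ℝ) + (μ + ν + 3) / 2) := Real.Gamma_pos_of_pos (by linarith)
  unfold lommelCoeff
  positivity

theorem lommelCoeff_succ (hν1 : -1 / 2 < ν) (hν2 : ν < μ + 1) (k : ℕ) :
    lommelCoeff μ ν (k + 1) =
      lommelCoeff μ ν k / ((2 * k + μ - ν + 3) * (2 * k + μ + ν + 3)) := by
  have hk : (0 : ℝ) ≤ k := k.cast_nonneg
  have h1 : 0 < (k : ℝ) + (μ - ν + 3) / 2 := by linarith
  have h2 : 0 < (k : ℝ) + (μ + ν + 3) / 2 := by linarith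
  have e1 : ((k + 1 : ℕ) : ℝ) + (μ - ν + 3) / 2 = (k : ℝ) + (μ - ν + 3) / 2 + 1 := by
    push_cast; ring
  have e2 : ((k + 1 : ℕ) : ℝ) + (μ + ν + 3) / 2 = (k : ℝ) + (μ + ν + 3) / 2 + 1 := by
    push_cast; ring
  have e3 : μ + 2 * ((k + 1 : ℕ) : ℝ) + 1 = μ + 2 * (k : ℝ) + 1 + (2 : ℕ) := by
    push_cast; ring
  have e4 : (2 * k + μ - ν + 3 : ℝ) = 2 * ((k : ℝ) + (μ - ν + 3) / 2) := by ring
  have e5 : (2 * k + μ + ν + 3 : ℝ) = 2 * ((k : ℝ) + (μ + ν + 3) / 2) := by ring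
  unfold lommelCoeff
  rw [e1, e2, e3, e4, e5, Real.Gamma_add_one h1.ne', Real.Gamma_add_one h2.ne',
    Real.rpow_add_natCast two_ne_zero, div_div]
  congr 1
  ring

theorem rpow_mul_lommel_term (k : ℕ) {x : ℝ} (hx : 0 < x) (c : ℝ) :
    x ^ c * ((x / 2) ^ (μ + 2 * (k : ℝ) + 1) /
      (Real.Gamma ((k : ℝ) + (μ - ν + 3) / 2) * Real.Gamma ((k : ℝ) + (μ + ν + 3) / 2))) =
    lommelCoeff μ ν k * x ^ (μ + c + 2 * k + 1) := by
  rw [show μ + c + 2 * (k : ℝ) + 1 = c + (μ + 2 * (k : ℝ) + 1) by ring, Real.rpow_add hx,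
    Real.div_rpow hx.le zero_le_two]
  unfold lommelCoeff
  simp only [div_eq_mul_inv, mul_inv]
  ring

theorem lommelCoeff_add_one (hν1 : -1 / 2 < ν) (hν2 : ν < μ + 1) (k : ℕ) :
    lommelCoeff (μ + 1) (ν + 1) k = lommelCoeff μ ν k / (2 * k + μ + ν + 3) := by
  have hk : (0 : ℝ) ≤ k := k.cast_nonneg
  have h2 : 0 < (k : ℝ) + (μ + ν + 3) / 2 := by linarith
  unfold lommelCoeff
  rw [show (k : ℝ) + (μ + 1 + (ν + 1) + 3) / 2 = (k : ℝ) + (μ + ν + 3) / 2 + 1 by ring,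
    show μ + 1 - (ν + 1) = μ - ν by ring,
    show μ + 1 + 2 * (k : ℝ) + 1 = μ + 2 * (k : ℝ) + 1 + 1 by ring,
    show (2 * k + μ + ν + 3 : ℝ) = 2 * ((k : ℝ) + (μ + ν + 3) / 2) by ring,
    Real.Gamma_add_one h2.ne', Real.rpow_add_one two_ne_zero, div_div]
  congr 1
  ring

theorem lommelCoeff_zero (hν2 : ν < μ + 1) :
    (μ - ν + 1) * lommelCoeff μ ν 0 =
      1 / (2 ^ μ * Real.Gamma ((μ - ν + 1) / 2) * Real.Gamma ((μ + ν + 3) / 2)) := by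
  have h1 : 0 < (μ - ν + 1) / 2 := by linarith
  have h3 : μ - ν + 1 ≠ 0 := by linarith
  unfold lommelCoeff
  rw [show ((0 : ℕ) : ℝ) + (μ - ν + 3) / 2 = (μ - ν + 1) / 2 + 1 by push_cast; ring,
    show ((0 : ℕ) : ℝ) + (μ + ν + 3) / 2 = (μ + ν + 3) / 2 by push_cast; ring,
    show μ + 2 * ((0 : ℕ) : ℝ) + 1 = μ + 1 by push_cast; ring,
    Real.Gamma_add_one h1.ne', Real.rpow_add_one two_ne_zero]
  simp only [div_eq_mul_inv, mul_inv, inv_inv]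
  field_simp

theorem summable_lommelCoeff (hν1 : -1 / 2 < ν) (hν2 : ν < μ + 1) {x : ℝ} (hx : 0 < x) :
    Summable fun k : ℕ => lommelCoeff μ ν k * x ^ (μ + ν + 2 * k + 2) := by
  have hpos : ∀ k : ℕ, 0 < lommelCoeff μ ν k * x ^ (μ + ν + 2 * k + 2) := fun k =>
    mul_pos (lommelCoeff_pos hν1 hν2 k) (Real.rpow_pos_of_pos hx _)
  refine summable_of_ratio_test_tendsto_lt_one (l := 0) one_pos
    (Filter.Eventually.of_forall fun k => (hpos k).ne') ?_
  have hlim : Filter.Tendsto (fun k : ℕ => x ^ 2 / (k : ℝ)) Filter.atTop (nhds 0) :=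
    tendsto_const_div_atTop_nhds_zero_nat _
  refine squeeze_zero' (Filter.Eventually.of_forall fun k => by positivity) ?_ hlim
  filter_upwards [Filter.eventually_gt_atTop 0] with k hk
  have hk' : (0 : ℝ) < k := by exact_mod_cast hk
  have hA := lommelCoeff_pos hν1 hν2 k
  have hX := Real.rpow_pos_of_pos hx (μ + ν + 2 * k + 2)
  rw [Real.norm_of_nonneg (hpos _).le, Real.norm_of_nonneg (hpos _).le,
    lommelCoeff_succ hν1 hν2,
    show μ + ν + 2 * ((k + 1 : ℕ) : ℝ) + 2 = μ + ν + 2 * k + 2 + (2 : ℕ) by push_cast; ring,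
    Real.rpow_add_natCast hx.ne']
  have hq : (k : ℝ) ≤ (2 * k + μ - ν + 3) * (2 * k + μ + ν + 3) := by
    nlinarith [mul_nonneg (show 0 ≤ 2 * k + μ - ν + 3 - k by linarith)
      (show 0 ≤ 2 * k + μ + ν + 3 - 1 by linarith)]
  have e : lommelCoeff μ ν k / ((2 * k + μ - ν + 3) * (2 * k + μ + ν + 3)) *
      (x ^ (μ + ν + 2 * k + 2) * x ^ 2) / (lommelCoeff μ ν k * x ^ (μ + ν + 2 * k + 2)) =
      x ^ 2 / ((2 * k + μ - ν + 3) * (2 * k + μ + ν + 3)) := by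
    have hq0 : (2 * k + μ - ν + 3) * (2 * k + μ + ν + 3) ≠ 0 := by linarith
    generalize (2 * k + μ - ν + 3) * (2 * k + μ + ν + 3) = q at *
    field_simp
  rw [e]
  gcongr

/-- `x ^ (ν + 1)` times the Lommel series as a convergent series. -/
theorem hasSum_rpow_mul_lommel (hν1 : -1 / 2 < ν) (hν2 : ν < μ + 1) {x : ℝ} (hx : 0 < x) :
    HasSum (fun k : ℕ => lommelCoeff μ ν k * x ^ (μ + ν + 2 * k + 2))
      (x ^ (ν + 1) * lommel μ ν x) := by
  have h := (summable_lommelCoeff hν1 hν2 hx).hasSum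
  convert h using 1
  unfold lommel
  rw [← tsum_mul_left]
  refine tsum_congr fun k => ?_
  rw [rpow_mul_lommel_term k hx]
  congr 2
  ring

/-- Termwise integration of the Lommel series. -/
theorem hasSum_integral_lommel (hν1 : -1 / 2 < ν) (hν2 : ν < μ + 1) {x : ℝ} (hx : 0 < x) :
    HasSum (fun k : ℕ => lommelCoeff μ ν k * lowerGamma (μ + ν + 2 * k + 2) x)
      (∫ u in (0:ℝ)..x, Real.exp (-u) * u ^ ν * lommel μ ν u) := by
  set f : ℕ → ℝ → ℝ := fun k u =>
    lommelCoeff μ ν k * (Real.exp (-u) * u ^ (μ + ν + 2 * (k : ℝ) + 2 - 1)) with hf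
  have hp : ∀ k : ℕ, 0 < μ + ν + 2 * (k : ℝ) + 2 := fun k => by
    have : (0 : ℝ) ≤ k := k.cast_nonneg
    linarith
  have hint : ∀ k, Integrable (f k) (volume.restrict (Set.Ioc 0 x)) := fun k =>
    ((intervalIntegrable_iff_integrableOn_Ioc_of_le hx.le).1
      (intervalIntegrable_exp_neg_mul_rpow (hp k) x)).const_mul _
  have hval : ∀ k, ∫ u in Set.Ioc 0 x, f k u =
      lommelCoeff μ ν k * lowerGamma (μ + ν + 2 * k + 2) x := fun k => by
    rw [hf, MeasureTheory.integral_const_mul, lowerGamma,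
      intervalIntegral.integral_of_le hx.le]
  have hnorm : ∀ k, ∫ u in Set.Ioc 0 x, ‖f k u‖ =
      lommelCoeff μ ν k * lowerGamma (μ + ν + 2 * k + 2) x := fun k => by
    rw [← hval k]
    refine setIntegral_congr_fun measurableSet_Ioc fun u hu => ?_
    exact Real.norm_of_nonneg (mul_nonneg (lommelCoeff_pos hν1 hν2 k).le
      (mul_nonneg (Real.exp_pos _).le (Real.rpow_nonneg hu.1.le _)))
  have hsum : Summable fun k => ∫ u in Set.Ioc 0 x, ‖f k u‖ := by
    simp only [hnorm]
    refine Summable.of_nonneg_of_le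
      (fun k => mul_nonneg (lommelCoeff_pos hν1 hν2 k).le (lowerGamma_nonneg _ hx)) (fun k => ?_)
      ((summable_lommelCoeff hν1 hν2 hx).div_const (μ + ν + 2))
    rw [mul_div_assoc]
    refine mul_le_mul_of_nonneg_left ((lowerGamma_le (hp k) hx).trans ?_)
      (lommelCoeff_pos hν1 hν2 k).le
    have : (0 : ℝ) ≤ k := k.cast_nonneg
    exact div_le_div_of_nonneg_left (Real.rpow_nonneg hx.le _) (by linarith) (by linarith)
  have key := hasSum_integral_of_summable_integral_norm hint hsum
  simp only [hval] at key
  rw [intervalIntegral.integral_of_le hx.le]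
  suffices h : ∫ u in Set.Ioc 0 x, Real.exp (-u) * u ^ ν * lommel μ ν u =
      ∫ u in Set.Ioc 0 x, ∑' k, f k u by rwa [h]
  refine setIntegral_congr_fun measurableSet_Ioc fun u hu => ?_
  simp only [hf, lommel]
  rw [← tsum_mul_left]
  refine tsum_congr fun k => ?_
  rw [mul_assoc, rpow_mul_lommel_term k hu.1,
    show μ + ν + 2 * (k : ℝ) + 2 - 1 = μ + ν + 2 * k + 1 by ring]
  ring

/-- The telescoping identity: two steps of the recurrence for the lower incomplete gamma function
relate consecutive terms of the integrated series. -/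
theorem lommel_telescope (hν1 : -1 / 2 < ν) (hν2 : ν < μ + 1) {x : ℝ} (hx : 0 < x) (k : ℕ) :
    (2 * k + μ - ν + 1) * (lommelCoeff μ ν k * lowerGamma (μ + ν + 2 * k + 2) x) -
      (2 * (k + 1 : ℕ) + μ - ν + 1) *
        (lommelCoeff μ ν (k + 1) * lowerGamma (μ + ν + 2 * (k + 1 : ℕ) + 2) x) =
    Real.exp (-x) * (lommelCoeff μ ν k * x ^ (μ + ν + 2 * k + 2) +
      x⁻¹ * (lommelCoeff (μ + 1) (ν + 1) k * x ^ (μ + 1 + (ν + 1) + 2 * k + 2))) -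
    (2 * ν + 1) * (lommelCoeff μ ν k * lowerGamma (μ + ν + 2 * k + 2) x) := by
  have hk : (0 : ℝ) ≤ k := k.cast_nonneg
  have hp : 0 < μ + ν + 2 * (k : ℝ) + 2 := by linarith
  have ha : (2 * k + μ - ν + 3 : ℝ) ≠ 0 := by linarith
  have hb : (2 * k + μ + ν + 3 : ℝ) ≠ 0 := by linarith
  rw [lommelCoeff_succ hν1 hν2, lommelCoeff_add_one hν1 hν2,
    show μ + ν + 2 * ((k + 1 : ℕ) : ℝ) + 2 = μ + ν + 2 * k + 2 + 1 + 1 by push_cast; ring,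
    lowerGamma_add_one (by linarith) hx, lowerGamma_add_one hp hx,
    show μ + 1 + (ν + 1) + 2 * (k : ℝ) + 2 = μ + ν + 2 * k + 2 + 1 + 1 by ring,
    Real.rpow_add_one hx.ne' (μ + ν + 2 * k + 2 + 1), Real.rpow_add_one hx.ne' (μ + ν + 2 * k + 2)]
  push_cast
  rw [show (2 * ((k : ℝ) + 1) + μ - ν + 1) = 2 * k + μ - ν + 3 by ring,
    show (μ + ν + 2 * (k : ℝ) + 2 + 1) = 2 * k + μ + ν + 3 by ring]
  field_simp
  ring

end

theorem stmt14 (μ ν : ℝ) (hμ : μ > -3/2) (hν1 : -1/2 < ν) (hν2 : ν < μ + 1) :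
    ∀ x : ℝ, 0 < x →
      ∫ u in (0:ℝ)..x, Real.exp (-u) * u ^ ν * lommel μ ν u =
        Real.exp (-x) * x ^ (ν + 1) / (2 * ν + 1) * (lommel μ ν x + lommel (μ + 1) (ν + 1) x) -
          lowerGamma (μ + ν + 2) x /
            (2 ^ μ * (2 * ν + 1) * Real.Gamma ((μ - ν + 1) / 2) * Real.Gamma ((μ + ν + 3) / 2)) := by
  intro x hx
  have hν : 2 * ν + 1 ≠ 0 := by linarith
  have hI := hasSum_integral_lommel hν1 hν2 hx
  have hS := hasSum_rpow_mul_lommel hν1 hν2 hx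
  have hS' := hasSum_rpow_mul_lommel (μ := μ + 1) (ν := ν + 1) (by linarith) (by linarith) hx
  set I := ∫ u in (0:ℝ)..x, Real.exp (-u) * u ^ ν * lommel μ ν u
  set E : ℕ → ℝ := fun k =>
    (2 * k + μ - ν + 1) * (lommelCoeff μ ν k * lowerGamma (μ + ν + 2 * k + 2) x) with hE
  have hdiff := ((hS.add (hS'.mul_left x⁻¹)).mul_left (Real.exp (-x))).sub (hI.mul_left (2 * ν + 1))
  simp only [← lommel_telescope hν1 hν2 hx] at hdiff
  have hE0 : Filter.Tendsto E Filter.atTop (nhds 0) := by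
    refine squeeze_zero (fun k => ?_) (fun k => ?_) hS.summable.tendsto_atTop_zero
    · have hk : (0 : ℝ) ≤ k := k.cast_nonneg
      exact mul_nonneg (by linarith)
        (mul_nonneg (lommelCoeff_pos hν1 hν2 k).le (lowerGamma_nonneg _ hx))
    · have hk : (0 : ℝ) ≤ k := k.cast_nonneg
      have hp : 0 < μ + ν + 2 * (k : ℝ) + 2 := by linarith
      have hγ := (le_div_iff₀ hp).1 (lowerGamma_le hp hx)
      have hγ0 := lowerGamma_nonneg (μ + ν + 2 * (k : ℝ) + 2) hx
      -- `ν > -1/2` says exactly that the factor `2k + μ - ν + 1` is less than `μ + ν + 2k + 2`.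
      have h1 : (2 * k + μ - ν + 1) * lowerGamma (μ + ν + 2 * k + 2) x ≤
          x ^ (μ + ν + 2 * (k : ℝ) + 2) := by
        nlinarith
      have h2 := mul_le_mul_of_nonneg_left h1 (lommelCoeff_pos hν1 hν2 k).le
      simp only [hE]
      linarith
  have htel := hdiff.tendsto_sum_nat
  have htel' : Filter.Tendsto (fun n => ∑ k ∈ Finset.range n, (E k - E (k + 1)))
      Filter.atTop (nhds (E 0 - 0)) := by
    simp only [Finset.sum_range_sub']
    exact tendsto_const_nhds.sub hE0
  have heq := tendsto_nhds_unique htel htel'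
  have hE0v : E 0 = lowerGamma (μ + ν + 2) x *
      (1 / (2 ^ μ * Real.Gamma ((μ - ν + 1) / 2) * Real.Gamma ((μ + ν + 3) / 2))) := by
    rw [← lommelCoeff_zero hν2]
    simp only [hE, Nat.cast_zero, mul_zero, add_zero, zero_add]
    ring
  rw [hE0v, Real.rpow_add_one hx.ne' (ν + 1)] at heq
  have heq' : (2 * ν + 1) * I =
      Real.exp (-x) * x ^ (ν + 1) * (lommel μ ν x + lommel (μ + 1) (ν + 1) x) -
      lowerGamma (μ + ν + 2) x *
      (1 / (2 ^ μ * Real.Gamma ((μ - ν + 1) / 2) * Real.Gamma ((μ + ν + 3) / 2))) := by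
    have hx1 : x⁻¹ * (x ^ (ν + 1) * x * lommel (μ + 1) (ν + 1) x) =
        x ^ (ν + 1) * lommel (μ + 1) (ν + 1) x := by
      field_simp
    rw [hx1] at heq
    linarith
  rw [eq_div_of_mul_eq hν ((mul_comm _ _).trans heq')]
  simp only [div_eq_mul_inv, mul_inv]
  ring
end

section
/- Let μ, ν be real with μ+ν > −2 and let 0 < β < 1. Then ∫_0^x e^{−βu} u^ν t̃_{μ,ν}(u) du ∼ x^{ν−1/2} e^{(1−β)x} / (√(2π)·(1−β)) as x → ∞; that is, the ratio of the integral to x^{ν−1/2} e^{(1−β)x} / (√(2π)(1−β)) tends to 1 as x → ∞. -/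
open Real MeasureTheory

/-!
Write `t̃_{μ,ν}` for `lommel μ ν`. The theorem follows from the pointwise asymptotics
`t̃_{μ,ν}(x) ~ e^x / √(2πx)`, valid for all real `μ, ν` (`lommelAsymp`). The integrand is then asymptotic to `x^(ν - 1/2) e^{(1-β)x} / √(2π)`, and
`integral_asymp` integrates such a relation by comparing with the derivative of
`x^(ν - 1/2) e^{(1-β)x} / (1-β)`. Here `μ + ν > -2` is what makes the integrand integrable at `0`
(`lommel_integrand_intervalIntegrable`): it is `u^(μ+ν+1)` times a continuous function. (Reciprocals
of `Γ` at its poles are `0` both classically and with the convention `Γ = 0`, `1 / 0 = 0` used here,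
so no parameter value is exceptional.)

For the pointwise asymptotics, write `s = μ + 5/2`.

* Euler's limit formula shows that `Γ(k+a) Γ(k+b)` depends asymptotically only on `a + b`
  (`gamma_ratio`). So the product of Gamma values in the `k`-th coefficient may be replaced by
  `Γ(k + s/2) Γ(k + s/2 + 1/2)`, which Legendre's duplication formula turns into a multiple of
  `2^(-2k) Γ(2k + s)`.
* Replacing coefficients by asymptotically equal positive ones does not alter the growth of the
  series, finitely many powers of `x` being negligible against `e^x` (`abel_sum`).
* The model series is a fractional integral of `cosh`:
  `∑ x^(2k+s-1) / Γ(2k+s) = Γ(s-1)⁻¹ ∫₀ˣ t^(s-2) cosh(x-t) dt` (`even_hasSum`, by the Beta integral),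
  and dominated convergence gives that it is `~ e^x / 2` (`even_tendsto`).

This requires the parameters to be large; since `t̃_{μ,ν}` and `t̃_{μ+2,ν}` differ only by one power
of `x` (`lommelAsymp_of_add_two`), the general case reduces to that one.
-/

/-! ### The model series `∑ x^(2k+s-1) / Γ(2k+s)` -/

/-- The real Beta integral on `[0, x]` with one natural number exponent. -/
lemma beta_nat {u x : ℝ} (hu : 0 < u) (hx : 0 < x) (n : ℕ) :
    ∫ t in (0:ℝ)..x, t ^ (u - 1) * (x - t) ^ n
      = x ^ (u + n) * (Gamma u * n.factorial / Gamma (u + n + 1)) := by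
  have h1 := Complex.betaIntegral_scaled (u : ℂ) ((n : ℂ) + 1) hx
  have h2 := Complex.Gamma_mul_Gamma_eq_betaIntegral (s := (u : ℂ)) (t := (n : ℂ) + 1)
    (by simpa using hu) (by simp; positivity)
  have hG : Gamma (u + n + 1) ≠ 0 := (Gamma_pos_of_pos (by positivity)).ne'
  have hG' : (Complex.Gamma (u + (n + 1)) : ℂ) = ((Gamma (u + n + 1) : ℝ) : ℂ) := by
    rw [← Complex.Gamma_ofReal]; push_cast; ring_nf
  rw [hG', Complex.Gamma_nat_eq_factorial, Complex.Gamma_ofReal] at h2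
  apply Complex.ofReal_injective
  rw [← intervalIntegral.integral_ofReal]
  have h3 : Complex.betaIntegral u (n + 1)
      = ((Gamma u * n.factorial / Gamma (u + n + 1) : ℝ) : ℂ) := by
    push_cast
    rw [eq_div_iff (by exact_mod_cast hG), mul_comm]
    exact h2.symm
  rw [Complex.ofReal_mul, ← h3]
  have h4 : ((x ^ (u + n) : ℝ) : ℂ) = (x : ℂ) ^ ((u : ℂ) + (n + 1) - 1) := by
    rw [Complex.ofReal_cpow hx.le]; push_cast; ring_nf
  rw [h4, ← h1]
  apply intervalIntegral.integral_congr
  intro t ht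
  rw [Set.uIcc_of_le hx.le] at ht
  simp only [Complex.ofReal_mul, Complex.ofReal_cpow ht.1, add_sub_cancel_right,
    Complex.cpow_natCast]
  push_cast
  rfl

/-- The model series as a fractional integral of `cosh`, obtained by integrating the Taylor series of
`cosh (x - t)` against `t ^ (s - 2)` term by term. -/
lemma even_hasSum {s x : ℝ} (hs : 1 < s) (hx : 0 < x) :
    HasSum (fun k : ℕ => x ^ (2 * (k : ℝ) + s - 1) / Gamma (2 * (k : ℝ) + s))
      ((∫ t in (0:ℝ)..x, t ^ (s - 2) * cosh (x - t)) / Gamma (s - 1)) := by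
  have hI : IntervalIntegrable (fun t : ℝ => t ^ (s - 2)) volume 0 x :=
    intervalIntegral.intervalIntegrable_rpow' (by linarith)
  have hG : Gamma (s - 1) ≠ 0 := (Gamma_pos_of_pos (by linarith)).ne'
  have key : HasSum
      (fun k : ℕ => ∫ t in (0:ℝ)..x, t ^ (s - 2) * ((x - t) ^ (2 * k) / (2 * k).factorial))
      (∫ t in (0:ℝ)..x, t ^ (s - 2) * cosh (x - t)) := by
    refine intervalIntegral.hasSum_integral_of_dominated_convergence
      (fun k t => t ^ (s - 2) * (x ^ (2 * k) / (2 * k).factorial)) ?_ ?_ ?_ ?_ ?_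
    · intro k
      refine AEStronglyMeasurable.mul ?_ ?_
      · exact hI.aestronglyMeasurable.mono_measure (by rw [Set.uIoc_of_le hx.le])
      · exact (by fun_prop : Continuous fun t : ℝ => (x - t) ^ (2 * k) / ((2 * k).factorial : ℝ)).aestronglyMeasurable
    · intro k
      refine Filter.Eventually.of_forall fun t ht => ?_
      rw [Set.uIoc_of_le hx.le] at ht
      have h0 : 0 ≤ t ^ (s - 2) := rpow_nonneg ht.1.le _
      have h1 : 0 ≤ x - t := by linarith [ht.2]
      rw [Real.norm_of_nonneg (by positivity)]
      gcongr
      linarith [ht.1]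
    · exact Filter.Eventually.of_forall fun t _ => ((hasSum_cosh x).summable.mul_left _)
    · have : (fun t : ℝ => ∑' k : ℕ, t ^ (s - 2) * (x ^ (2 * k) / (2 * k).factorial))
          = fun t => t ^ (s - 2) * cosh x := by
        funext t; rw [tsum_mul_left, (hasSum_cosh x).tsum_eq]
      rw [this]
      exact hI.mul_const _
    · exact Filter.Eventually.of_forall fun t _ => (hasSum_cosh (x - t)).mul_left _
  refine (key.div_const (Gamma (s - 1))).congr_fun ?_
  intro k
  have hb := beta_nat (u := s - 1) (by linarith) hx (2 * k)
  have hG2 : Gamma (2 * (k : ℝ) + s) ≠ 0 := (Gamma_pos_of_pos (by positivity)).ne'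
  have : ∀ t : ℝ, t ^ (s - 2) * ((x - t) ^ (2 * k) / (2 * k).factorial)
      = (t ^ (s - 1 - 1) * (x - t) ^ (2 * k)) / ((2 * k).factorial : ℝ) := by
    intro t
    rw [show s - 1 - 1 = s - 2 by ring]; ring
  simp only [this]
  rw [intervalIntegral.integral_div, hb]
  have hf : ((2 * k).factorial : ℝ) ≠ 0 := by positivity
  push_cast
  rw [show s - 1 + 2 * (k : ℝ) + 1 = 2 * k + s by ring, show s - 1 + 2 * (k : ℝ) = 2 * k + s - 1 by ring]
  field_simp

/-- The model series is asymptotic to `e^x / 2`. -/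
lemma even_tendsto {s : ℝ} (hs : 1 < s) :
    Filter.Tendsto (fun x : ℝ =>
      (∑' k : ℕ, x ^ (2 * (k : ℝ) + s - 1) / Gamma (2 * (k : ℝ) + s)) * exp (-x))
      Filter.atTop (nhds (1 / 2)) := by
  have hG : Gamma (s - 1) ≠ 0 := (Gamma_pos_of_pos (by linarith)).ne'
  have hconv := Real.GammaIntegral_convergent (s := s - 1) (by linarith)
  -- the integral times `e^{-x}`, rewritten over the fixed domain `(0, ∞)`
  have hint : Filter.Tendsto (fun x : ℝ => ∫ t in Set.Ioi (0:ℝ), (Set.Iic x).indicator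
      (fun t => exp (-t) * t ^ (s - 1 - 1) * ((1 + exp (2 * t - 2 * x)) / 2)) t)
      Filter.atTop (nhds (∫ t in Set.Ioi (0:ℝ), exp (-t) * t ^ (s - 1 - 1) * (1 / 2))) := by
    refine tendsto_integral_filter_of_dominated_convergence
      (fun t => exp (-t) * t ^ (s - 1 - 1)) ?_ ?_ hconv ?_
    · refine Filter.Eventually.of_forall fun x => ?_
      refine AEStronglyMeasurable.indicator ?_ measurableSet_Iic
      exact hconv.aestronglyMeasurable.mul (by fun_prop)
    · refine Filter.Eventually.of_forall fun x => ?_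
      refine (ae_restrict_iff' measurableSet_Ioi).2 (Filter.Eventually.of_forall fun t ht => ?_)
      have h0 : 0 ≤ t ^ (s - 1 - 1) := rpow_nonneg (le_of_lt ht) _
      by_cases htx : t ∈ Set.Iic x
      · rw [Set.indicator_of_mem htx, Real.norm_of_nonneg (by positivity)]
        have : exp (2 * t - 2 * x) ≤ 1 := by
          rw [exp_le_one_iff]; linarith [Set.mem_Iic.1 htx]
        exact mul_le_of_le_one_right (by positivity) (by linarith)
      · rw [Set.indicator_of_notMem htx, norm_zero]; positivity
    · refine Filter.Eventually.of_forall fun t => ?_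
      have h1 : Filter.Tendsto (fun x : ℝ => exp (2 * t - 2 * x)) Filter.atTop (nhds 0) := by
        refine tendsto_exp_atBot.comp ?_
        refine Filter.tendsto_atBot_add_const_left _ _ ?_
        exact Filter.tendsto_neg_atTop_atBot.comp
          (Filter.tendsto_id.const_mul_atTop (by norm_num : (0:ℝ) < 2))
      have h2 := ((h1.const_add 1).div_const 2).const_mul (exp (-t) * t ^ (s - 1 - 1))
      rw [add_zero] at h2
      refine h2.congr' ?_
      filter_upwards [Filter.eventually_ge_atTop t] with x hx
      rw [Set.indicator_of_mem (Set.mem_Iic.2 hx)]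
  rw [integral_mul_const, ← Gamma_eq_integral (by linarith)] at hint
  have h3 := hint.div_const (Gamma (s - 1))
  rw [mul_div_assoc, mul_comm, div_mul_cancel₀ _ hG] at h3
  refine h3.congr' ?_
  filter_upwards [Filter.eventually_gt_atTop 0] with x hx
  rw [(even_hasSum hs hx).tsum_eq, div_mul_eq_mul_div, ← intervalIntegral.integral_mul_const,
    intervalIntegral.integral_of_le hx.le, ← Set.Ioi_inter_Iic, setIntegral_indicator measurableSet_Iic]
  congr 1
  refine integral_congr_ae (Filter.Eventually.of_forall fun t => ?_)
  simp only
  rw [cosh_eq, show s - 1 - 1 = s - 2 by ring]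
  have e1 : exp (-t) = exp (x - t) * exp (-x) := by rw [← exp_add]; ring_nf
  have e2 : exp (-(x - t)) * exp (-x) = exp (-t) * exp (2 * t - 2 * x) := by
    rw [← exp_add, ← exp_add]; ring_nf
  linear_combination (t ^ (s-2) / 2) * (e1 - e2)

/-! ### Coefficient asymptotics and an Abelian theorem -/

/-- Euler's limit formula, read as `Γ(n + 1 + a) ~ n! n^a`. -/
lemma gamma_shift {a : ℝ} (ha : 0 < a) :
    Filter.Tendsto (fun n : ℕ => (n : ℝ) ^ a * n.factorial / Gamma ((n : ℝ) + 1 + a))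
      Filter.atTop (nhds 1) := by
  have hG : Gamma a ≠ 0 := (Gamma_pos_of_pos ha).ne'
  have h := (GammaSeq_tendsto_Gamma a).div_const (Gamma a)
  rw [div_self hG] at h
  have hprod : ∀ n : ℕ, Gamma ((n : ℝ) + 1 + a)
      = (∏ j ∈ Finset.range (n + 1), (a + j)) * Gamma a := by
    intro n
    induction n with
    | zero => simp [add_comm (1:ℝ) a, Gamma_add_one ha.ne']
    | succ n ih =>
      rw [Finset.prod_range_succ, mul_right_comm, ← ih,
        show ((n + 1 : ℕ) : ℝ) + 1 + a = ((n : ℝ) + 1 + a) + 1 by push_cast; ring,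
        Gamma_add_one (by positivity)]
      push_cast; ring
  refine h.congr fun n => ?_
  rw [hprod, GammaSeq, div_div]

/-- `Γ(k + a) Γ(k + b)` depends asymptotically only on `a + b`. -/
lemma gamma_ratio {a b c d : ℝ} (ha : 0 < a) (hb : 0 < b) (hc : 0 < c) (hd : 0 < d)
    (habcd : a + b = c + d) :
    Filter.Tendsto (fun k : ℕ => Gamma ((k : ℝ) + c) * Gamma ((k : ℝ) + d) /
      (Gamma ((k : ℝ) + a) * Gamma ((k : ℝ) + b))) Filter.atTop (nhds 1) := by
  rw [← Filter.tendsto_add_atTop_iff_nat 1]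
  have h := ((gamma_shift ha).mul (gamma_shift hb)).div
    ((gamma_shift hc).mul (gamma_shift hd)) (by norm_num)
  rw [mul_one, div_one] at h
  refine h.congr' ?_
  filter_upwards [Filter.eventually_gt_atTop 0] with n hn
  have hn' : (0 : ℝ) < n := by exact_mod_cast hn
  have hpow : (n : ℝ) ^ a * (n : ℝ) ^ b = (n : ℝ) ^ c * (n : ℝ) ^ d := by
    rw [← rpow_add hn', ← rpow_add hn', habcd]
  have hGc : Gamma ((n : ℝ) + 1 + c) ≠ 0 := (Gamma_pos_of_pos (by positivity)).ne'
  have hGd : Gamma ((n : ℝ) + 1 + d) ≠ 0 := (Gamma_pos_of_pos (by positivity)).ne'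
  have hGa : Gamma ((n : ℝ) + 1 + a) ≠ 0 := (Gamma_pos_of_pos (by positivity)).ne'
  have hGb : Gamma ((n : ℝ) + 1 + b) ≠ 0 := (Gamma_pos_of_pos (by positivity)).ne'
  have hc' : (n : ℝ) ^ c ≠ 0 := (rpow_pos_of_pos hn' _).ne'
  have hd' : (n : ℝ) ^ d ≠ 0 := (rpow_pos_of_pos hn' _).ne'
  have hf : (n.factorial : ℝ) ≠ 0 := by positivity
  simp only [Pi.div_apply]
  push_cast
  field_simp
  linear_combination hpow

lemma rpow_exp_tendsto (q : ℝ) :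
    Filter.Tendsto (fun x : ℝ => x ^ q * exp (-x)) Filter.atTop (nhds 0) := by
  simpa using tendsto_rpow_mul_exp_neg_mul_atTop_nhds_zero q 1 one_pos

/-- An Abelian theorem: if `a k ~ b k` with `b k > 0`, then a series with coefficients `a` has the same
exponential growth as the one with coefficients `b`. -/
lemma abel_sum {a b : ℕ → ℝ} {p L : ℝ} (hb : ∀ k, 0 < b k)
    (hab : Filter.Tendsto (fun k => a k / b k) Filter.atTop (nhds 1))
    (hs : ∀ x : ℝ, 0 < x → Summable fun k : ℕ => b k * x ^ (2 * (k : ℝ) + p))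
    (hlim : Filter.Tendsto (fun x : ℝ => (∑' k : ℕ, b k * x ^ (2 * (k : ℝ) + p)) * exp (-x))
      Filter.atTop (nhds L)) :
    (∀ x : ℝ, 0 < x → Summable fun k : ℕ => a k * x ^ (2 * (k : ℝ) + p)) ∧
    Filter.Tendsto (fun x : ℝ => (∑' k : ℕ, a k * x ^ (2 * (k : ℝ) + p)) * exp (-x))
      Filter.atTop (nhds L) := by
  have hdiff : ∀ ε > 0, ∃ N : ℕ, ∀ k ≥ N, |a k - b k| ≤ ε * b k := by
    intro ε hε
    obtain ⟨N, hN⟩ := Metric.tendsto_atTop.1 hab ε hε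
    refine ⟨N, fun k hk => ?_⟩
    have h := (hN k hk).le
    rw [Real.dist_eq, div_sub_one (hb k).ne', abs_div, abs_of_pos (hb k), div_le_iff₀ (hb k)] at h
    exact h
  -- a finite correction absorbs the finitely many indices where the comparison fails
  have main : ∀ ε > 0, ∃ N : ℕ, ∀ x : ℝ, 0 < x →
      Summable (fun k : ℕ => (a k - b k) * x ^ (2 * (k : ℝ) + p)) ∧
      |∑' k : ℕ, (a k - b k) * x ^ (2 * (k : ℝ) + p)|
        ≤ ε * (∑' k : ℕ, b k * x ^ (2 * (k : ℝ) + p))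
          + ∑ k ∈ Finset.range N, |a k - b k| * x ^ (2 * (k : ℝ) + p) := by
    intro ε hε
    obtain ⟨N, hN⟩ := hdiff ε hε
    refine ⟨N, fun x hx => ?_⟩
    have hfin : HasSum (fun k : ℕ => if k ∈ Finset.range N then
        |a k - b k| * x ^ (2 * (k : ℝ) + p) else 0)
        (∑ k ∈ Finset.range N, |a k - b k| * x ^ (2 * (k : ℝ) + p)) := by
      rw [← Finset.sum_congr rfl (fun k hk => if_pos hk)]
      exact hasSum_sum_of_ne_finset_zero fun k hk => if_neg hk
    have hsum := ((hs x hx).hasSum.mul_left ε).add hfin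
    have hle : ∀ k : ℕ, ‖(a k - b k) * x ^ (2 * (k : ℝ) + p)‖ ≤
        ε * (b k * x ^ (2 * (k : ℝ) + p)) + (if k ∈ Finset.range N then
        |a k - b k| * x ^ (2 * (k : ℝ) + p) else 0) := by
      intro k
      have hx' : 0 < x ^ (2 * (k : ℝ) + p) := rpow_pos_of_pos hx _
      have hb' := hb k
      rw [norm_mul, Real.norm_eq_abs, Real.norm_of_nonneg hx'.le]
      split_ifs with hk
      · have : 0 ≤ ε * (b k * x ^ (2 * (k : ℝ) + p)) := by positivity
        linarith
      · have := hN k (by simpa using hk)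
        rw [add_zero, ← mul_assoc]
        gcongr
    refine ⟨Summable.of_norm_bounded hsum.summable hle, ?_⟩
    rw [← Real.norm_eq_abs]
    exact tsum_of_norm_bounded hsum hle
  have hsa : ∀ x : ℝ, 0 < x → Summable fun k : ℕ => a k * x ^ (2 * (k : ℝ) + p) := by
    intro x hx
    obtain ⟨N, hN⟩ := main 1 one_pos
    refine ((hN x hx).1.add (hs x hx)).congr fun k => ?_
    ring
  refine ⟨hsa, ?_⟩
  have hzero : Filter.Tendsto
      (fun x : ℝ => (∑' k : ℕ, (a k - b k) * x ^ (2 * (k : ℝ) + p)) * exp (-x))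
      Filter.atTop (nhds 0) := by
    rw [Metric.tendsto_nhds]
    intro ε hε
    have hδ : 0 < ε / (2 * (|L| + 1)) := by positivity
    obtain ⟨N, hN⟩ := main _ hδ
    have h1 : Filter.Tendsto (fun x : ℝ =>
        (∑ k ∈ Finset.range N, |a k - b k| * x ^ (2 * (k : ℝ) + p)) * exp (-x))
        Filter.atTop (nhds 0) := by
      have := tendsto_finsetSum (Finset.range N) (fun (k : ℕ) _ =>
        (rpow_exp_tendsto (2 * (k : ℝ) + p)).const_mul |a k - b k|)
      simp only [mul_zero, Finset.sum_const_zero] at this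
      refine this.congr fun x => ?_
      rw [Finset.sum_mul]
      exact Finset.sum_congr rfl fun k _ => by ring
    have h2 := (hlim.const_mul (ε / (2 * (|L| + 1)))).add h1
    have hlt : ε / (2 * (|L| + 1)) * L + 0 < ε := by
      have : ε / (2 * (|L| + 1)) * L ≤ ε / (2 * (|L| + 1)) * (|L| + 1) := by
        gcongr; linarith [le_abs_self L]
      have h3 : ε / (2 * (|L| + 1)) * (|L| + 1) = ε / 2 := by field_simp
      linarith
    filter_upwards [h2.eventually (gt_mem_nhds hlt), Filter.eventually_gt_atTop 0] with x h3 hx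
    rw [dist_zero_right, norm_mul, Real.norm_eq_abs, Real.norm_of_nonneg (exp_pos _).le]
    refine lt_of_le_of_lt (mul_le_mul_of_nonneg_right (hN x hx).2 (exp_pos _).le) ?_
    linarith
  have := hlim.add hzero
  rw [add_zero] at this
  refine this.congr' ?_
  filter_upwards [Filter.eventually_gt_atTop 0] with x hx
  rw [← add_mul, ← (hs x hx).tsum_add]
  · congr 2; funext k; ring
  · exact (main 1 one_pos).choose_spec x hx |>.1

/-! ### Pointwise asymptotics of the Lommel function -/

/-- The coefficient of `(x / 2) ^ (2 * k + μ + 1)` in the series of `lommel μ ν x`. -/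
noncomputable def coef (μ ν : ℝ) (k : ℕ) : ℝ :=
  1 / (Gamma ((k : ℝ) + (μ - ν + 3) / 2) * Gamma ((k : ℝ) + (μ + ν + 3) / 2))

/-- The series of `t̃_{μ,ν}` converges on `(0, ∞)` and `t̃_{μ,ν}(x) ~ e^x / √(2πx)`. Convergence is
included because a divergent `tsum` is `0`. -/
def LommelAsymp (μ ν : ℝ) : Prop :=
  (∀ x : ℝ, 0 < x → Summable fun k : ℕ => coef μ ν k * (x / 2) ^ (2 * (k : ℝ) + (μ + 1))) ∧
  Filter.Tendsto (fun x : ℝ => lommel μ ν x * x ^ (1 / 2 : ℝ) * exp (-x))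
    Filter.atTop (nhds (1 / √(2 * π)))

lemma lommel_eq (μ ν x : ℝ) :
    lommel μ ν x = ∑' k : ℕ, coef μ ν k * (x / 2) ^ (2 * (k : ℝ) + (μ + 1)) := by
  unfold lommel coef
  refine tsum_congr fun k => ?_
  rw [show μ + 2 * (k : ℝ) + 1 = 2 * (k : ℝ) + (μ + 1) by ring]
  ring

/-- The asymptotics when all Gamma arguments are positive and the model series has `s = μ + 5/2 > 1`. -/
lemma lommelAsymp_of_large {μ ν : ℝ} (ha : 0 < (μ - ν + 3) / 2) (hb : 0 < (μ + ν + 3) / 2)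
    (hμ : 0 ≤ μ) : LommelAsymp μ ν := by
  set C : ℝ := √2 / √π with hC
  have hπ : 0 < √π := by positivity
  have hCpos : 0 < C := by positivity
  have hbpos : ∀ k : ℕ, 0 < 1 / Gamma (2 * (k : ℝ) + (μ + 5 / 2)) := fun k =>
    one_div_pos.2 (Gamma_pos_of_pos (by positivity))
  have hratio : Filter.Tendsto (fun k : ℕ =>
      (coef μ ν k * (1 / 2) ^ (2 * (k : ℝ) + (μ + 1)) / C) /
        (1 / Gamma (2 * (k : ℝ) + (μ + 5 / 2)))) Filter.atTop (nhds 1) := by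
    refine (gamma_ratio ha hb (c := (μ + 5 / 2) / 2) (d := (μ + 5 / 2) / 2 + 1 / 2)
      (by positivity) (by positivity) (by ring)).congr fun k => ?_
    rw [← add_assoc, Gamma_mul_Gamma_add_half,
      show 2 * ((k : ℝ) + (μ + 5 / 2) / 2) = 2 * k + (μ + 5 / 2) by ring]
    have h2 : (1 / 2 : ℝ) ^ (2 * (k : ℝ) + (μ + 1))
        = 2 ^ (1 - (2 * (k : ℝ) + (μ + 5 / 2))) * √2 := by
      rw [one_div, inv_rpow zero_le_two, ← rpow_neg zero_le_two, sqrt_eq_rpow,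
        ← rpow_add zero_lt_two]
      ring_nf
    have hG := (hbpos k)
    rw [coef, h2, hC]
    have : √2 ≠ 0 := by positivity
    have h4 : Gamma (2 * (k : ℝ) + (μ + 5 / 2)) ≠ 0 := (Gamma_pos_of_pos (by positivity)).ne'
    field_simp
  have hs1 : (1 : ℝ) < μ + 5 / 2 := by linarith
  have heq : ∀ x : ℝ, ∀ k : ℕ, x ^ (2 * (k : ℝ) + (μ + 5 / 2) - 1) / Gamma (2 * (k : ℝ) + (μ + 5 / 2))
      = 1 / Gamma (2 * (k : ℝ) + (μ + 5 / 2)) * x ^ (2 * (k : ℝ) + (μ + 3 / 2)) := by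
    intro x k
    rw [show 2 * (k : ℝ) + (μ + 5 / 2) - 1 = 2 * (k : ℝ) + (μ + 3 / 2) by ring]; ring
  obtain ⟨hS, hT⟩ := abel_sum (p := μ + 3 / 2) (L := 1 / 2) hbpos hratio
    (fun x hx => ((even_hasSum hs1 hx).summable).congr fun k => (heq x k))
    ((even_tendsto hs1).congr fun x => by simp only [heq])
  have hterm : ∀ x : ℝ, 0 < x → ∀ k : ℕ,
      coef μ ν k * (x / 2) ^ (2 * (k : ℝ) + (μ + 1)) = C * x ^ (-(1 / 2) : ℝ) *
      (coef μ ν k * (1 / 2) ^ (2 * (k : ℝ) + (μ + 1)) / C * x ^ (2 * (k : ℝ) + (μ + 3 / 2))) := by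
    intro x hx k
    have h1 : x ^ (-(1 / 2) : ℝ) * x ^ (2 * (k : ℝ) + (μ + 3 / 2))
        = x ^ (2 * (k : ℝ) + (μ + 1)) := by
      rw [← rpow_add hx]; ring_nf
    rw [div_eq_mul_one_div x 2, mul_rpow hx.le (by norm_num), ← h1]
    field_simp
  refine ⟨fun x hx => ((hS x hx).mul_left (C * x ^ (-(1 / 2) : ℝ))).congr fun k =>
    (hterm x hx k).symm, ?_⟩
  have hL : C * (1 / 2) = 1 / √(2 * π) := by
    rw [hC, sqrt_mul zero_le_two]
    field_simp
    exact sq_sqrt zero_le_two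
  rw [← hL]
  refine (hT.const_mul C).congr' ?_
  filter_upwards [Filter.eventually_gt_atTop 0] with x hx
  rw [lommel_eq, tsum_congr (hterm x hx), tsum_mul_left]
  have h1 : x ^ (-(1 / 2) : ℝ) * x ^ (1 / 2 : ℝ) = 1 := by
    rw [← rpow_add hx]; simp
  linear_combination (-C * (∑' k : ℕ, coef μ ν k * (1 / 2) ^ (2 * (k : ℝ) + (μ + 1)) / C *
    x ^ (2 * (k : ℝ) + (μ + 3 / 2))) * exp (-x)) * h1

/-- Dropping the zeroth term of the series of `t̃_{μ,ν}` leaves the series of `t̃_{μ+2,ν}`. -/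
lemma lommelAsymp_of_add_two {μ ν : ℝ} (h : LommelAsymp (μ + 2) ν) : LommelAsymp μ ν := by
  obtain ⟨hS, hT⟩ := h
  have hterm : ∀ x : ℝ, ∀ k : ℕ,
      coef (μ + 2) ν k * (x / 2) ^ (2 * (k : ℝ) + (μ + 2 + 1))
        = coef μ ν (k + 1) * (x / 2) ^ (2 * ((k + 1 : ℕ) : ℝ) + (μ + 1)) := by
    intro x k
    unfold coef
    push_cast
    rw [show (k : ℝ) + 1 + (μ - ν + 3) / 2 = k + (μ + 2 - ν + 3) / 2 by ring,
      show (k : ℝ) + 1 + (μ + ν + 3) / 2 = k + (μ + 2 + ν + 3) / 2 by ring,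
      show 2 * ((k : ℝ) + 1) + (μ + 1) = 2 * k + (μ + 2 + 1) by ring]
  have hS' : ∀ x : ℝ, 0 < x →
      Summable fun k : ℕ => coef μ ν k * (x / 2) ^ (2 * (k : ℝ) + (μ + 1)) := fun x hx =>
    (summable_nat_add_iff 1).1 ((hS x hx).congr (hterm x))
  refine ⟨hS', ?_⟩
  have h0 := (rpow_exp_tendsto (μ + 1 + 1 / 2)).const_mul (coef μ ν 0 * (1 / 2) ^ (μ + 1))
  have h1 := h0.add hT
  rw [mul_zero, zero_add] at h1
  refine h1.congr' ?_
  filter_upwards [Filter.eventually_gt_atTop 0] with x hx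
  rw [lommel_eq μ, (hS' x hx).tsum_eq_zero_add, ← tsum_congr (hterm x), ← lommel_eq,
    rpow_add hx (μ + 1), div_eq_mul_one_div x 2, mul_rpow hx.le (by norm_num)]
  simp only [Nat.cast_zero, mul_zero, zero_add]
  ring

lemma lommelAsymp (μ ν : ℝ) : LommelAsymp μ ν := by
  obtain ⟨n, hn⟩ := exists_nat_gt (|μ| + |ν|)
  have hstep : ∀ m : ℕ, LommelAsymp (μ + 2 * m) ν → LommelAsymp μ ν := by
    intro m
    induction m with
    | zero => simp
    | succ m ih =>
      intro h
      refine ih (lommelAsymp_of_add_two ?_)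
      convert! h using 1
      push_cast; ring
  have h1 := neg_abs_le μ
  have h2 := neg_abs_le ν
  have h3 := le_abs_self ν
  have h4 := abs_nonneg μ
  have h5 := abs_nonneg ν
  exact hstep n (lommelAsymp_of_large (by linarith) (by linarith) (by linarith))

/-! ### Integration -/

lemma lommel_integrand_intervalIntegrable {μ ν β : ℝ} (h : μ + ν > -2) {x : ℝ} (hx : 0 < x) :
    IntervalIntegrable (fun u => exp (-β * u) * u ^ ν * lommel μ ν u) volume 0 x := by
  have hS := (lommelAsymp μ ν).1
  have hsum : ∀ u : ℝ, 0 < u → ∀ k : ℕ, coef μ ν k * (u / 2) ^ (2 * (k : ℝ) + (μ + 1))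
      = (u / 2) ^ (μ + 1) * (coef μ ν k * (u / 2) ^ (2 * k)) := by
    intro u hu k
    rw [rpow_add (by positivity), show (2 * (k : ℝ)) = ((2 * k : ℕ) : ℝ) by push_cast; ring,
      rpow_natCast]
    ring
  have hcont : ContinuousOn (fun u : ℝ => ∑' k : ℕ, coef μ ν k * (u / 2) ^ (2 * k))
      (Set.uIcc 0 x) := by
    refine continuousOn_tsum (u := fun k => |coef μ ν k * (x / 2) ^ (2 * k)|) ?_ ?_ ?_
    · intro k; fun_prop
    · have h1 := (hS x hx).congr (hsum x hx)
      rw [summable_mul_left_iff (by positivity)] at h1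
      exact h1.abs
    · intro k u hu
      rw [Set.uIcc_of_le hx.le] at hu
      have := hu.1
      rw [Real.norm_eq_abs, abs_mul, abs_mul, abs_of_nonneg (by positivity : 0 ≤ (u / 2) ^ (2 * k)),
        abs_of_nonneg (by positivity : 0 ≤ (x / 2) ^ (2 * k))]
      gcongr
      exact hu.2
  have h1 : IntervalIntegrable (fun u : ℝ => u ^ (ν + (μ + 1))) volume 0 x :=
    intervalIntegral.intervalIntegrable_rpow' (by linarith)
  have h2 := h1.mul_continuousOn (hcont.mul
    (by fun_prop : ContinuousOn (fun u : ℝ => exp (-β * u) * (1 / 2) ^ (μ + 1)) (Set.uIcc 0 x)))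
  refine h2.congr ?_
  intro u hu
  rw [Set.uIoc_of_le hx.le] at hu
  have hu0 := hu.1
  have hp : (u / 2) ^ (μ + 1) = u ^ (μ + 1) * (1 / 2) ^ (μ + 1) := by
    rw [div_eq_mul_one_div, mul_rpow hu0.le (by norm_num)]
  simp only [Pi.mul_apply]
  rw [lommel_eq, tsum_congr (hsum u hu0), tsum_mul_left, rpow_add hu0, hp]
  ring

/-- If `g(x) ~ x^p e^{δx}` with `δ > 0`, then `∫₀ˣ g ~ x^p e^{δx} / δ`. -/
lemma integral_asymp {g : ℝ → ℝ} {p δ : ℝ} (hδ : 0 < δ)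
    (hg : ∀ x : ℝ, 0 < x → IntervalIntegrable g volume 0 x)
    (hlim : Filter.Tendsto (fun x => g x / (x ^ p * exp (δ * x))) Filter.atTop (nhds 1)) :
    Filter.Tendsto (fun x => (∫ u in (0:ℝ)..x, g u) / (x ^ p * exp (δ * x) / δ))
      Filter.atTop (nhds 1) := by
  -- the claimed asymptotic form and its derivative, which is itself asymptotic to `g`
  set F : ℝ → ℝ := fun x => x ^ p * exp (δ * x) / δ with hF
  set F' : ℝ → ℝ := fun x => x ^ p * exp (δ * x) * (1 + p / δ * x⁻¹) with hF'
  have hFtop : Filter.Tendsto F Filter.atTop Filter.atTop := by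
    have := (tendsto_exp_mul_div_rpow_atTop (-p) δ hδ).atTop_div_const hδ
    refine this.congr' ?_
    filter_upwards [Filter.eventually_gt_atTop 0] with x hx
    rw [rpow_neg hx.le, div_inv_eq_mul, hF]
    ring
  have hder : ∀ x : ℝ, 0 < x → HasDerivAt F (F' x) x := by
    intro x hx
    have h1 : HasDerivAt (fun x : ℝ => x ^ p) (p * x ^ (p - 1)) x :=
      hasDerivAt_rpow_const (Or.inl hx.ne')
    have h2 : HasDerivAt (fun x : ℝ => exp (δ * x)) (exp (δ * x) * (δ * 1)) x :=
      ((hasDerivAt_id x).const_mul δ).exp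
    convert! (h1.mul h2).div_const δ using 1
    rw [hF', rpow_sub_one hx.ne']
    field_simp
    ring
  have hcont : ∀ x : ℝ, 0 < x → ContinuousAt F' x := by
    intro x hx
    have := hx.ne'
    have h1 : ContinuousAt (fun x : ℝ => x ^ p) x := continuousAt_rpow_const _ _ (Or.inl hx.ne')
    exact (h1.mul (by fun_prop)).mul (by fun_prop (disch := assumption))
  have hlin : Filter.Tendsto (fun x : ℝ => 1 + p / δ * x⁻¹) Filter.atTop (nhds 1) := by
    simpa using (tendsto_inv_atTop_zero.const_mul (p / δ)).const_add (1 : ℝ)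
  have hrat : Filter.Tendsto (fun x => g x / F' x) Filter.atTop (nhds 1) := by
    have := hlim.div hlin one_ne_zero
    rw [div_one] at this
    refine this.congr fun x => ?_
    simp only [Pi.div_apply, hF', div_div]
  rw [Metric.tendsto_nhds]
  intro ε hε
  have hε2 : 0 < ε / 2 := by positivity
  obtain ⟨A, hA⟩ := Filter.eventually_atTop.1
    ((hlin.eventually (lt_mem_nhds one_pos)).and
      ((Metric.tendsto_nhds.1 hrat _ hε2).and (Filter.eventually_gt_atTop 0)))
  have hA0 : 0 < A := (hA A le_rfl).2.2
  have hF'pos : ∀ u, A ≤ u → 0 < F' u := by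
    intro u hu
    have h1 := (hA u hu).1
    have h2 := (hA u hu).2.2
    simp only [hF']
    positivity
  have hFpos : ∀ u, 0 < u → 0 < F u := by
    intro u hu
    simp only [hF]
    positivity
  set K : ℝ := |∫ u in (0:ℝ)..A, g u| + F A with hK
  filter_upwards [hFtop.eventually_gt_atTop (K / (ε / 2)), Filter.eventually_ge_atTop A]
    with x hx hxA
  have hx0 : 0 < x := hA0.trans_le hxA
  have hFx := hFpos x hx0
  have hgA := hg A hA0
  have hgAx : IntervalIntegrable g volume A x := hgA.symm.trans (hg x hx0)
  have hF'i : IntervalIntegrable F' volume A x := by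
    refine ContinuousOn.intervalIntegrable fun u hu => ?_
    rw [Set.uIcc_of_le hxA] at hu
    exact (hcont u (hA0.trans_le hu.1)).continuousWithinAt
  have hFTC : ∫ u in A..x, F' u = F x - F A := by
    refine intervalIntegral.integral_eq_sub_of_hasDerivAt (fun u hu => ?_) hF'i
    rw [Set.uIcc_of_le hxA] at hu
    exact hder u (hA0.trans_le hu.1)
  have hbound : |∫ u in A..x, (g u - F' u)| ≤ ε / 2 * (F x - F A) := by
    rw [← hFTC, ← intervalIntegral.integral_const_mul, ← Real.norm_eq_abs]
    refine intervalIntegral.norm_integral_le_of_norm_le hxA ?_ (hF'i.const_mul _)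
    refine Filter.Eventually.of_forall fun u hu => ?_
    have hp := hF'pos u hu.1.le
    have h1 := (hA u hu.1.le).2.1
    rw [Real.dist_eq, div_sub_one hp.ne', abs_div, abs_of_pos hp, div_lt_iff₀ hp] at h1
    exact h1.le
  rw [intervalIntegral.integral_sub hgAx hF'i, hFTC] at hbound
  rw [← intervalIntegral.integral_add_adjacent_intervals hgA hgAx]
  rw [div_lt_iff₀ hε2] at hx
  change dist (_ / F x) 1 < ε
  rw [Real.dist_eq, div_sub_one hFx.ne', abs_div, abs_of_pos hFx, div_lt_iff₀ hFx]
  have hFA := hFpos A hA0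
  have htri : |(∫ u in (0:ℝ)..A, g u) + (∫ u in A..x, g u) - F x|
      ≤ |∫ u in (0:ℝ)..A, g u| + |(∫ u in A..x, g u) - (F x - F A)| + F A := by
    rw [show (∫ u in (0:ℝ)..A, g u) + (∫ u in A..x, g u) - F x
      = (∫ u in (0:ℝ)..A, g u) + ((∫ u in A..x, g u) - (F x - F A)) + (-F A) by ring]
    refine (abs_add_three _ _ _).trans ?_
    rw [abs_neg, abs_of_pos hFA]
  have : 0 < ε / 2 * F A := by positivity
  linarith

theorem stmt15 (μ ν β : ℝ) (h : μ + ν > -2) (hβ1 : 0 < β) (hβ2 : β < 1) :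
    Filter.Tendsto
      (fun x : ℝ =>
        (∫ u in (0:ℝ)..x, Real.exp (-β * u) * u ^ ν * lommel μ ν u) /
          (x ^ (ν - 1/2) * Real.exp ((1 - β) * x) / (Real.sqrt (2 * π) * (1 - β))))
      Filter.atTop (nhds 1) := by
  have hc : 0 < √(2 * π) := by positivity
  have hδ : 0 < 1 - β := by linarith
  have key := integral_asymp (g := fun u => √(2 * π) * (exp (-β * u) * u ^ ν * lommel μ ν u))
    (p := ν - 1 / 2) hδ
    (fun x hx => (lommel_integrand_intervalIntegrable h hx).const_mul _) (by
      have h1 := (lommelAsymp μ ν).2.const_mul √(2 * π)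
      rw [mul_one_div, div_self hc.ne'] at h1
      refine h1.congr' ?_
      filter_upwards [Filter.eventually_gt_atTop 0] with x hx
      have hp : x ^ ν = x ^ (ν - 1 / 2) * x ^ (1 / 2 : ℝ) := by
        rw [← rpow_add hx]; ring_nf
      have he : exp (-β * x) = exp ((1 - β) * x) * exp (-x) := by
        rw [← exp_add]; ring_nf
      have hx' : x ^ (ν - 1 / 2) ≠ 0 := (rpow_pos_of_pos hx _).ne'
      rw [hp, he]
      field_simp)
  refine key.congr fun x => ?_
  rw [intervalIntegral.integral_const_mul]
  field_simp
end

section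
/- Let μ > −3/2, −1/2 ≤ ν < μ+1 and 0 < β < 1. Then for all x > 0, the series ∑_{k=0}^∞ β^k t̃_{μ+k+1,ν+k+1}(x) converges and satisfies ∑_{k=0}^∞ β^k t̃_{μ+k+1,ν+k+1}(x) < t̃_{μ+1,ν+1}(x)/(1−β). -/
/-!
The sequence `k ↦ lommel (μ + k + 1) (ν + k + 1) x` is strictly decreasing, so the series is dominated
by the geometric series `∑ β ^ k * lommel (μ + 1) (ν + 1) x`, strictly in the term `k = 1`.

Monotonicity (`lommel_succ_lt`) is elementary. Let `T k` be the terms of `lommel μ ν x` and put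
`y = x / 2`, `a = (μ - ν + 3) / 2`, `s = (μ + ν + 3) / 2`. Then `T (k + 1) = T k * y² / ((k+a)(k+s))`,
while the `k`-th term of `lommel (μ + 1) (ν + 1) x` is `T k * y / (k+s)`. If `ν ≥ 0`, that is `a ≤ s`,
then the arithmetic-geometric mean inequality bounds the latter by `(T k + T (k + 1)) / 2`, and
summing over `k` gives `lommel (μ + 1) (ν + 1) x ≤ lommel μ ν x - T 0 / 2`.
-/


open Real MeasureTheory

/-- The `k`-th term of the series defining `lommel μ ν x`. -/
noncomputable def lommelTerm (μ ν x : ℝ) (k : ℕ) : ℝ :=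
  (x / 2) ^ (μ + 2 * (k : ℝ) + 1) /
    (Real.Gamma ((k : ℝ) + (μ - ν + 3) / 2) * Real.Gamma ((k : ℝ) + (μ + ν + 3) / 2))

lemma lommelTerm_pos {μ ν x : ℝ} (h1 : 0 < μ - ν + 3) (h2 : 0 < μ + ν + 3) (hx : 0 < x) (k : ℕ) :
    0 < lommelTerm μ ν x k := by
  unfold lommelTerm
  have := Real.Gamma_pos_of_pos (s := (k : ℝ) + (μ - ν + 3) / 2) (by positivity)
  have := Real.Gamma_pos_of_pos (s := (k : ℝ) + (μ + ν + 3) / 2) (by positivity)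
  positivity

lemma lommelTerm_succ {μ ν x : ℝ} (h1 : 0 < μ - ν + 3) (h2 : 0 < μ + ν + 3) (hx : 0 < x) (k : ℕ) :
    lommelTerm μ ν x (k + 1) = lommelTerm μ ν x k *
      ((x / 2) ^ 2 / (((k : ℝ) + (μ - ν + 3) / 2) * ((k : ℝ) + (μ + ν + 3) / 2))) := by
  have ha : 0 < (k : ℝ) + (μ - ν + 3) / 2 := by positivity
  have hs : 0 < (k : ℝ) + (μ + ν + 3) / 2 := by positivity
  have hp : (x / 2) ^ (μ + 2 * ((k : ℝ) + 1) + 1) =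
      (x / 2) ^ (μ + 2 * (k : ℝ) + 1) * (x / 2) ^ 2 := by
    rw [← Real.rpow_natCast (x / 2) 2, ← Real.rpow_add (by positivity)]
    congr 1
    push_cast
    ring
  unfold lommelTerm
  push_cast
  rw [hp, show (k : ℝ) + 1 + (μ - ν + 3) / 2 = (k : ℝ) + (μ - ν + 3) / 2 + 1 by ring,
    show (k : ℝ) + 1 + (μ + ν + 3) / 2 = (k : ℝ) + (μ + ν + 3) / 2 + 1 by ring,
    Real.Gamma_add_one ha.ne', Real.Gamma_add_one hs.ne', div_mul_div_comm]
  congr 1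
  ring

lemma lommelTerm_shift {μ ν x : ℝ} (h2 : 0 < μ + ν + 3) (hx : 0 < x) (k : ℕ) :
    lommelTerm (μ + 1) (ν + 1) x k = lommelTerm μ ν x k *
      ((x / 2) / ((k : ℝ) + (μ + ν + 3) / 2)) := by
  have hs : 0 < (k : ℝ) + (μ + ν + 3) / 2 := by positivity
  have hp : (x / 2) ^ (μ + 1 + 2 * (k : ℝ) + 1) =
      (x / 2) ^ (μ + 2 * (k : ℝ) + 1) * (x / 2) := by
    rw [← Real.rpow_add_one (by positivity)]
    congr 1
    ring
  unfold lommelTerm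
  rw [hp, show (k : ℝ) + (μ + 1 - (ν + 1) + 3) / 2 = (k : ℝ) + (μ - ν + 3) / 2 by ring,
    show (k : ℝ) + (μ + 1 + (ν + 1) + 3) / 2 = (k : ℝ) + (μ + ν + 3) / 2 + 1 by ring,
    Real.Gamma_add_one hs.ne', div_mul_div_comm]
  congr 1
  ring

lemma summable_lommelTerm {μ ν x : ℝ} (h1 : 0 < μ - ν + 3) (h2 : 0 < μ + ν + 3) (hx : 0 < x) :
    Summable (lommelTerm μ ν x) := by
  refine summable_of_ratio_test_tendsto_lt_one (l := 0) one_pos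
    (Filter.Eventually.of_forall fun k => (lommelTerm_pos h1 h2 hx k).ne') ?_
  have hk : ∀ c : ℝ, Filter.Tendsto (fun k : ℕ => (k : ℝ) + c) Filter.atTop Filter.atTop :=
    fun c => Filter.tendsto_atTop_add_const_right _ c tendsto_natCast_atTop_atTop
  refine (((hk ((μ - ν + 3) / 2)).atTop_mul_atTop₀
    (hk ((μ + ν + 3) / 2))).const_div_atTop ((x / 2) ^ 2)).congr fun k => ?_
  have h := lommelTerm_pos h1 h2 hx k
  rw [Real.norm_of_nonneg (lommelTerm_pos h1 h2 hx (k + 1)).le, Real.norm_of_nonneg h.le,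
    lommelTerm_succ h1 h2 hx, mul_div_cancel_left₀ _ h.ne']

/-- The arithmetic-geometric mean step; `0 ≤ ν` says that the first Gamma argument is at most the
second. -/
lemma lommelTerm_shift_le {μ ν x : ℝ} (h1 : 0 < μ - ν + 3) (hν : 0 ≤ ν) (hx : 0 < x) (k : ℕ) :
    lommelTerm (μ + 1) (ν + 1) x k ≤ (lommelTerm μ ν x k + lommelTerm μ ν x (k + 1)) / 2 := by
  have h2 : 0 < μ + ν + 3 := by linarith
  rw [lommelTerm_shift h2 hx, lommelTerm_succ h1 h2 hx]
  have ha : 0 < (k : ℝ) + (μ - ν + 3) / 2 := by positivity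
  have has : (k : ℝ) + (μ - ν + 3) / 2 ≤ (k : ℝ) + (μ + ν + 3) / 2 := by linarith
  have hT := lommelTerm_pos h1 h2 hx k
  generalize (k : ℝ) + (μ - ν + 3) / 2 = a at *
  generalize (k : ℝ) + (μ + ν + 3) / 2 = s at *
  have hs : 0 < s := ha.trans_le has
  have hy : 0 < x / 2 := by positivity
  generalize x / 2 = y at *
  have key : y / s ≤ (1 + y ^ 2 / (a * s)) / 2 := by
    -- Replacing `a` by the larger `s` turns the right side into `(1 + (y / s)²) / 2`.
    have h : (y / s) ^ 2 ≤ y ^ 2 / (a * s) := by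
      rw [div_pow]
      apply div_le_div_of_nonneg_left (by positivity) (by positivity)
      nlinarith
    nlinarith [sq_nonneg (y / s - 1)]
  nlinarith [mul_le_mul_of_nonneg_left key hT.le]

lemma lommel_pos {μ ν x : ℝ} (h1 : 0 < μ - ν + 3) (h2 : 0 < μ + ν + 3) (hx : 0 < x) :
    0 < lommel μ ν x :=
  (summable_lommelTerm h1 h2 hx).tsum_pos (fun k => (lommelTerm_pos h1 h2 hx k).le) 0
    (lommelTerm_pos h1 h2 hx 0)

lemma lommel_succ_lt {μ ν x : ℝ} (h1 : 0 < μ - ν + 3) (hν : 0 ≤ ν) (hx : 0 < x) :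
    lommel (μ + 1) (ν + 1) x < lommel μ ν x := by
  have h2 : 0 < μ + ν + 3 := by linarith
  have hS := summable_lommelTerm h1 h2 hx
  have hS1 : Summable fun k => lommelTerm μ ν x (k + 1) := (summable_nat_add_iff 1).2 hS
  have hS' := summable_lommelTerm (μ := μ + 1) (ν := ν + 1) (by linarith) (by linarith) hx
  have hle := hS'.tsum_le_tsum (lommelTerm_shift_le h1 hν hx) ((hS.add hS1).div_const 2)
  rw [tsum_div_const, hS.tsum_add hS1] at hle
  have h0 := hS.tsum_eq_zero_add
  have hpos := lommelTerm_pos h1 h2 hx 0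
  change ∑' k, lommelTerm (μ + 1) (ν + 1) x k < ∑' k, lommelTerm μ ν x k
  linarith

theorem stmt17 (μ ν β : ℝ) (hμ : μ > -3/2) (hν1 : -1/2 ≤ ν) (hν2 : ν < μ + 1)
    (hβ1 : 0 < β) (hβ2 : β < 1) :
    ∀ x : ℝ, 0 < x →
      Summable (fun k : ℕ => β ^ k * lommel (μ + (k : ℝ) + 1) (ν + (k : ℝ) + 1) x) ∧
      ∑' k : ℕ, β ^ k * lommel (μ + (k : ℝ) + 1) (ν + (k : ℝ) + 1) x <
        lommel (μ + 1) (ν + 1) x / (1 - β) := by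
  intro x hx
  have hstep : ∀ k : ℕ, lommel (μ + ((k + 1 : ℕ) : ℝ) + 1) (ν + ((k + 1 : ℕ) : ℝ) + 1) x <
      lommel (μ + (k : ℝ) + 1) (ν + (k : ℝ) + 1) x := by
    intro k
    have hk : (0 : ℝ) ≤ k := k.cast_nonneg
    have h := lommel_succ_lt (μ := μ + k + 1) (ν := ν + k + 1) (by linarith) (by linarith) hx
    push_cast
    rwa [← add_assoc μ, ← add_assoc ν]
  have hanti : StrictAnti fun k : ℕ => lommel (μ + (k : ℝ) + 1) (ν + (k : ℝ) + 1) x :=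
    strictAnti_nat_of_succ_lt hstep
  have hle : ∀ k : ℕ, β ^ k * lommel (μ + (k : ℝ) + 1) (ν + (k : ℝ) + 1) x ≤
      β ^ k * lommel (μ + 1) (ν + 1) x := by
    intro k
    have h := hanti.antitone k.zero_le
    simp only [Nat.cast_zero, add_zero] at h
    gcongr
  have hlt : β ^ 1 * lommel (μ + ((1 : ℕ) : ℝ) + 1) (ν + ((1 : ℕ) : ℝ) + 1) x <
      β ^ 1 * lommel (μ + 1) (ν + 1) x := by
    have h := hanti Nat.zero_lt_one
    simp only [Nat.cast_zero, add_zero] at h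
    gcongr
  have hgeom : HasSum (fun k : ℕ => β ^ k * lommel (μ + 1) (ν + 1) x)
      (lommel (μ + 1) (ν + 1) x / (1 - β)) := by
    rw [div_eq_inv_mul]
    exact (hasSum_geometric_of_lt_one hβ1.le hβ2).mul_right _
  have hsum : Summable fun k : ℕ => β ^ k * lommel (μ + (k : ℝ) + 1) (ν + (k : ℝ) + 1) x := by
    refine Summable.of_nonneg_of_le (fun k => ?_) hle hgeom.summable
    have hk : (0 : ℝ) ≤ k := k.cast_nonneg
    exact mul_nonneg (by positivity) (lommel_pos (by linarith) (by linarith) hx).le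
  refine ⟨hsum, ?_⟩
  rw [← hgeom.tsum_eq]
  exact hsum.tsum_lt_tsum hle hlt hgeom.summable
end

section
/- Let μ > −1/2, 1/2 ≤ ν < μ+1 and 0 < β < 1. Then for all x > 0, ∑_{k=0}^∞ β^k t̃_{μ+k+1,ν+k+1}(x) < (e^{βx}/x^ν) · ∫_0^x e^{−βu} u^ν t̃_{μ,ν}(u) du < t̃_{μ,ν}(x)/(1−β). -/
/-!
Write `t_{μ,ν}` for `lommel μ ν` and `J_k(x) = ∫₀ˣ e^{-βu} u^ν t_{μ+k,ν+k}(u) du`. Everything rests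
on the derivative formula `(x^ν t_{μ,ν})' = x^ν t_{μ-1,ν-1}` (`hasDerivAt_lom`), which is the
recursion `Γ(s+1) = sΓ(s)` applied term by term.

Lower bound. The derivative of `e^{-βx} x^ν t_{μ+k+1,ν+k+1}` is
`e^{-βx} x^ν (t_{μ+k,ν+k} - β t_{μ+k+1,ν+k+1} - ((k+1)/x) t_{μ+k+1,ν+k+1})`. Dropping the last
term, which is negative, and integrating gives
`e^{-βx} x^ν t_{μ+k+1,ν+k+1}(x) < J_k(x) - β J_{k+1}(x)` (`step`). Multiplying by `β^k` and summing,
the right-hand side telescopes to at most `J_0(x)`; the strict gap at `k = 0` survives in the limit.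

Upper bound. `(e^{-βx} x^ν t_{μ,ν})' = e^{-βx} x^ν (t_{μ-1,ν-1} - β t_{μ,ν})`, which exceeds
`(1-β) e^{-βx} x^ν t_{μ,ν}` as soon as `t_{μ,ν} < t_{μ-1,ν-1}`; then integrate (`upper`).

The monotonicity `t_{μ,ν} < t_{μ-1,ν-1}` for `1/2 ≤ ν < μ+1` (`key`, `lom_lt`) is the delicate point:
for `ν` near `1/2` it is not visible on the power series coefficients. Instead, the difference
`D = t_{μ-1,ν-1} - t_{μ,ν}` satisfies
`(e^x x^{1-ν} D)' = e^x x^{1-ν} (h + (2ν-1) t_{μ,ν}/x)` with `h > 0` a constant multiple of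
`x^{μ-1}`, and `e^x x^{1-ν} D` vanishes at `0` because `μ + 1 - ν > 0`.

Calculus is done on the entire function `Phi a b z = ∑ z^k / (Γ(k+a) Γ(k+b))`, in terms of which
`t_{μ,ν}(x) = (x/2)^{μ+1} Phi a b (x²/4)` with `a = (μ-ν+3)/2` and `b = (μ+ν+3)/2`.
-/

open Real MeasureTheory

open Filter Topology

namespace LommelAux

/-! ### The entire function underlying the Lommel function -/

/-- The coefficient `1 / (Γ(k+a) Γ(k+b))`. -/
noncomputable def coef (a b : ℝ) (k : ℕ) : ℝ :=
  1 / (Real.Gamma ((k : ℝ) + a) * Real.Gamma ((k : ℝ) + b))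

/-- The entire function `∑ z^k / (Γ(k+a) Γ(k+b))`; the series converges when `a, b > 0`. -/
noncomputable def Phi (a b z : ℝ) : ℝ := ∑' k : ℕ, coef a b k * z ^ k

lemma coef_pos {a b : ℝ} (ha : 0 < a) (hb : 0 < b) (k : ℕ) : 0 < coef a b k := by
  unfold coef
  have h1 := Real.Gamma_pos_of_pos (show 0 < (k : ℝ) + a by positivity)
  have h2 := Real.Gamma_pos_of_pos (show 0 < (k : ℝ) + b by positivity)
  positivity

lemma coef_comm (a b : ℝ) (k : ℕ) : coef a b k = coef b a k := by
  unfold coef; rw [mul_comm]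

lemma coef_add_one {a b : ℝ} (hb : 0 < b) (k : ℕ) :
    ((k : ℝ) + b) * coef a (b + 1) k = coef a b k := by
  unfold coef
  have hkb : (k : ℝ) + b ≠ 0 := by positivity
  rw [← add_assoc, Real.Gamma_add_one hkb]
  field_simp

lemma coef_succ (a b : ℝ) (k : ℕ) : coef a b (k + 1) = coef (a + 1) (b + 1) k := by
  unfold coef
  push_cast
  rw [show (k : ℝ) + 1 + a = k + (a + 1) by ring, show (k : ℝ) + 1 + b = k + (b + 1) by ring]

lemma summable_coef {a b : ℝ} (ha : 0 < a) (hb : 0 < b) (z : ℝ) :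
    Summable fun k : ℕ => coef a b k * z ^ k := by
  rcases eq_or_ne z 0 with rfl | hz
  · refine summable_of_ne_finset_zero (s := {0}) fun k hk => ?_
    simp at hk
    simp [hk]
  refine summable_of_ratio_test_tendsto_lt_one (l := 0) one_pos ?_ ?_
  · exact Eventually.of_forall fun k => mul_ne_zero (coef_pos ha hb k).ne' (pow_ne_zero _ hz)
  · have h : ∀ k : ℕ, ‖coef a b (k + 1) * z ^ (k + 1)‖ / ‖coef a b k * z ^ k‖
        = (|z| / ((k : ℝ) + a)) * (1 / ((k : ℝ) + b)) := by
      intro k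
      have e : coef a b k = ((k : ℝ) + a) * (((k : ℝ) + b) * coef a b (k + 1)) := by
        rw [coef_succ, coef_add_one hb, coef_comm (a + 1) b, coef_add_one ha, coef_comm]
      have hc := coef_pos ha hb (k + 1)
      have hka : 0 < (k : ℝ) + a := by positivity
      have hkb : 0 < (k : ℝ) + b := by positivity
      have hz' : 0 < |z| := abs_pos.2 hz
      rw [e]
      simp only [norm_mul, Real.norm_eq_abs, abs_pow, abs_of_pos hc, abs_of_pos hka,
        abs_of_pos hkb]
      field_simp
      ring
    simp_rw [h]
    have hat : ∀ c : ℝ, Tendsto (fun k : ℕ => (k : ℝ) + c) atTop atTop := fun c =>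
      tendsto_atTop_add_const_right _ _ tendsto_natCast_atTop_atTop
    simpa using ((hat a).const_div_atTop |z|).mul ((hat b).const_div_atTop 1)

lemma Phi_pos {a b z : ℝ} (ha : 0 < a) (hb : 0 < b) (hz : 0 ≤ z) : 0 < Phi a b z := by
  refine (summable_coef ha hb z).tsum_pos
    (fun k => mul_nonneg (coef_pos ha hb k).le (pow_nonneg hz k)) 0 ?_
  simpa using coef_pos ha hb 0

lemma Phi_comm (a b z : ℝ) : Phi a b z = Phi b a z := by
  unfold Phi
  simp_rw [coef_comm a b]

/-- The term-by-term derivative of `Phi a b`; the term `k = 0` vanishes through its factor `k`. -/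
noncomputable def dPhi (a b z : ℝ) : ℝ := ∑' k : ℕ, coef a b k * ((k : ℝ) * z ^ (k - 1))

/-- Since `k ≤ 2^k`, the differentiated series on `|y| ≤ R` is dominated by `Phi a b (2R)`,
provided `1 ≤ R`. -/
lemma deriv_term_bound {a b R y : ℝ} (ha : 0 < a) (hb : 0 < b) (hR : 1 ≤ R) (hy : |y| ≤ R)
    (k : ℕ) : ‖coef a b k * ((k : ℝ) * y ^ (k - 1))‖ ≤ coef a b k * (2 * R) ^ k := by
  have hc := coef_pos ha hb k
  simp only [norm_mul, Real.norm_eq_abs, abs_pow, abs_of_pos hc, Nat.abs_cast]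
  rw [mul_pow]
  have h1 : (k : ℝ) ≤ 2 ^ k := by exact_mod_cast (Nat.lt_two_pow_self).le
  have h2 : |y| ^ (k - 1) ≤ R ^ k :=
    (pow_le_pow_left₀ (abs_nonneg y) hy _).trans (pow_le_pow_right₀ hR (Nat.sub_le _ _))
  gcongr

lemma summable_dPhi {a b : ℝ} (ha : 0 < a) (hb : 0 < b) (z : ℝ) :
    Summable fun k : ℕ => coef a b k * ((k : ℝ) * z ^ (k - 1)) :=
  .of_norm_bounded (summable_coef ha hb (2 * (|z| + 1)))
    (deriv_term_bound ha hb (by linarith [abs_nonneg z]) (by linarith))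

lemma hasDerivAt_Phi {a b : ℝ} (ha : 0 < a) (hb : 0 < b) (z : ℝ) :
    HasDerivAt (Phi a b) (dPhi a b z) z := by
  have hz : z ∈ Metric.ball (0 : ℝ) (|z| + 1) := by simp
  refine hasDerivAt_tsum_of_isPreconnected (t := Metric.ball (0 : ℝ) (|z| + 1))
    (g := fun k w => coef a b k * w ^ k)
    (g' := fun k w => coef a b k * ((k : ℝ) * w ^ (k - 1)))
    (summable_coef ha hb (2 * (|z| + 1))) Metric.isOpen_ball
    (convex_ball _ _).isPreconnected ?_ ?_ hz (summable_coef ha hb z) hz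
  · intro k y _
    exact (hasDerivAt_pow k y).const_mul _
  · intro k y hy
    refine deriv_term_bound ha hb (by linarith [abs_nonneg z]) ?_ k
    simpa using (mem_ball_zero_iff.1 hy).le

lemma continuous_Phi {a b : ℝ} (ha : 0 < a) (hb : 0 < b) : Continuous (Phi a b) :=
  continuous_iff_continuousAt.2 fun z => (hasDerivAt_Phi ha hb z).continuousAt

/-- The recursion `(k + b) / Γ(k+b+1) = 1 / Γ(k+b)` as a differential identity lowering `b + 1`
to `b`. -/
lemma dPhi_right {a b : ℝ} (ha : 0 < a) (hb : 0 < b) (z : ℝ) :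
    z * dPhi a (b + 1) z + b * Phi a (b + 1) z = Phi a b z := by
  have hb' : 0 < b + 1 := by linarith
  unfold dPhi Phi
  rw [← tsum_mul_left, ← tsum_mul_left,
    ← ((summable_dPhi ha hb' z).mul_left z).tsum_add ((summable_coef ha hb' z).mul_left b)]
  refine tsum_congr fun k => ?_
  rw [← coef_add_one hb]
  rcases k with _ | k
  · simp
  · simp only [Nat.add_sub_cancel]; ring

lemma Phi_shift {a b : ℝ} (ha : 0 < a) (hb : 0 < b) (z : ℝ) :
    Phi a b z = coef a b 0 + z * Phi (a + 1) (b + 1) z := by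
  unfold Phi
  rw [(summable_coef ha hb z).tsum_eq_zero_add, ← tsum_mul_left]
  simp only [pow_zero, mul_one]
  congr 1
  refine tsum_congr fun k => ?_
  rw [coef_succ]; ring

/-- The analogue of `dPhi_right` in the first parameter. -/
lemma dPhi_left {a b : ℝ} (ha : 0 < a) (hb : 0 < b) (z : ℝ) :
    z * dPhi (a + 1) b z + a * Phi (a + 1) b z = Phi a b z := by
  have h := dPhi_right hb ha z
  have hd : dPhi (a + 1) b z = dPhi b (a + 1) z := by
    unfold dPhi
    simp_rw [coef_comm (a + 1) b]
  rw [hd, Phi_comm (a + 1) b, Phi_comm a b]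
  exact h

/-! ### Monotonicity under a simultaneous unit shift of `μ` and `ν` -/

/-- The inequality `t_{μ,ν} < t_{μ-1,ν-1}` in terms of `Phi`, with `a = (μ-ν+1)/2`,
`b = (μ+ν+1)/2` and `y = x/2`: multiplied by the integrating factor `e^{2y} y^{2a}`, the difference
of the two sides vanishes at `0` and has positive derivative. The condition `a + 1/2 ≤ b` is
`1/2 ≤ ν`. -/
lemma key {a b y : ℝ} (ha : 0 < a) (hb : 0 < b) (hab : a + 1 / 2 ≤ b) (hy : 0 < y) :
    y * Phi (a + 1) (b + 1) (y ^ 2) < Phi (a + 1) b (y ^ 2) := by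
  have ha' : 0 < a + 1 := by linarith
  have hb' : 0 < b + 1 := by linarith
  set E : ℝ → ℝ := fun y => Real.exp (2 * y) * y ^ (2 * a) *
    (Phi (a + 1) b (y ^ 2) - y * Phi (a + 1) (b + 1) (y ^ 2)) with hE
  have hcont : Continuous E := by
    have h1 := continuous_Phi ha' hb
    have h2 := continuous_Phi ha' hb'
    have h3 : Continuous fun y : ℝ => y ^ (2 * a) :=
      Real.continuous_rpow_const (by linarith)
    fun_prop
  have hder : ∀ w : ℝ, 0 < w → HasDerivAt E (Real.exp (2 * w) * w ^ (2 * a) / w *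
      (2 * coef a b 0 + (2 * b - 2 * a - 1) * (w * Phi (a + 1) (b + 1) (w ^ 2)))) w := by
    intro w hw
    have hsq : HasDerivAt (fun w : ℝ => w ^ 2) (2 * w) w := by
      simpa using hasDerivAt_pow 2 w
    have hP := (hasDerivAt_Phi ha' hb (w ^ 2)).comp w hsq
    have hQ := (hasDerivAt_id w).mul ((hasDerivAt_Phi ha' hb' (w ^ 2)).comp w hsq)
    have he : HasDerivAt (fun w : ℝ => Real.exp (2 * w)) (Real.exp (2 * w) * 2) w := by
      simpa using ((hasDerivAt_id w).const_mul 2).exp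
    have hp : HasDerivAt (fun w : ℝ => w ^ (2 * a)) (2 * a * (w ^ (2 * a) / w)) w := by
      have := Real.hasDerivAt_rpow_const (x := w) (p := 2 * a) (Or.inl hw.ne')
      rwa [Real.rpow_sub_one hw.ne'] at this
    have h := (he.mul hp).mul (hP.sub hQ)
    refine h.congr_deriv ?_
    have e1 := dPhi_left ha hb (w ^ 2)
    have e2 := dPhi_right ha' hb (w ^ 2)
    have e3 := Phi_shift ha hb (w ^ 2)
    rw [e3] at e1
    simp only [Function.comp, id]
    simp only [Pi.mul_apply, Pi.sub_apply, Function.comp, id]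
    field_simp
    -- `e1` carries the positive inhomogeneous term `coef a b 0`.
    linear_combination (2 : ℝ) * e1 - 2 * w * e2
  have hmono : StrictMonoOn E (Set.Ici 0) := by
    refine strictMonoOn_of_deriv_pos (convex_Ici 0) hcont.continuousOn fun w hw => ?_
    rw [interior_Ici] at hw
    have hw : 0 < w := hw
    rw [(hder w hw).deriv]
    have h1 := coef_pos ha hb 0
    have h2 := Phi_pos ha' hb' (sq_nonneg w)
    have h3 : 0 ≤ 2 * b - 2 * a - 1 := by linarith
    positivity
  have h0 : E 0 = 0 := by
    simp [hE, Real.zero_rpow (show 2 * a ≠ 0 by positivity)]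
  have hlt := hmono (Set.mem_Ici.2 le_rfl) (Set.mem_Ici.2 hy.le) hy
  rw [h0] at hlt
  have : 0 < Phi (a + 1) b (y ^ 2) - y * Phi (a + 1) (b + 1) (y ^ 2) :=
    pos_of_mul_pos_right hlt (by positivity)
  linarith

/-! ### Lommel functions in closed form -/

/-- The Lommel function expressed through `Phi`. It agrees with `lommel` on `[0, ∞)` when
`-1 < μ`, and is continuous on all of `ℝ` if moreover `|ν| < μ + 3`. -/
noncomputable def lom (μ ν x : ℝ) : ℝ :=
  (x / 2) ^ (μ + 1) * Phi ((μ - ν + 3) / 2) ((μ + ν + 3) / 2) ((x / 2) ^ 2)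

lemma lommel_eq {μ ν x : ℝ} (hμ : 0 < μ + 1) (hx : 0 ≤ x) : lommel μ ν x = lom μ ν x := by
  unfold lommel lom Phi
  rw [← tsum_mul_left]
  refine tsum_congr fun k => ?_
  have : (x / 2) ^ (μ + 2 * (k : ℝ) + 1) = (x / 2) ^ (μ + 1) * ((x / 2) ^ 2) ^ k := by
    -- Nonnegative exponents make the splitting valid at `x = 0` as well.
    rw [show μ + 2 * (k : ℝ) + 1 = (μ + 1) + ((2 * k : ℕ) : ℝ) by push_cast; ring,
      Real.rpow_add_of_nonneg (by positivity) hμ.le (by positivity), Real.rpow_natCast, pow_mul]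
  rw [this, coef]
  ring

lemma lom_pos {μ ν x : ℝ} (ha : 0 < μ - ν + 3) (hb : 0 < μ + ν + 3) (hx : 0 < x) :
    0 < lom μ ν x :=
  mul_pos (by positivity) (Phi_pos (by linarith) (by linarith) (sq_nonneg _))

lemma continuous_lom {μ ν : ℝ} (hμ : 0 < μ + 1) (ha : 0 < μ - ν + 3) (hb : 0 < μ + ν + 3) :
    Continuous (lom μ ν) := by
  have h1 := continuous_Phi (show 0 < (μ - ν + 3) / 2 by linarith)
    (show 0 < (μ + ν + 3) / 2 by linarith)
  have h2 : Continuous fun y : ℝ => y ^ (μ + 1) := Real.continuous_rpow_const hμ.le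
  unfold lom
  exact (h2.comp (continuous_id.div_const 2)).mul (h1.comp (by fun_prop))

/-- Equivalent to `(x^ν t_{μ,ν})' = x^ν t_{μ-1,ν-1}`. -/
lemma hasDerivAt_lom {μ ν x : ℝ} (ha : 0 < μ - ν + 3) (hb : 0 < μ + ν + 1) (hx : 0 < x) :
    HasDerivAt (lom μ ν) (lom (μ - 1) (ν - 1) x - ν / x * lom μ ν x) x := by
  have ha' : 0 < (μ - ν + 3) / 2 := by linarith
  have hb' : 0 < (μ + ν + 1) / 2 := by linarith
  have hd : HasDerivAt (fun x : ℝ => x / 2) (1 / 2) x := (hasDerivAt_id x).div_const 2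
  have hsq : HasDerivAt (fun x : ℝ => (x / 2) ^ 2) (x / 2) x := by
    refine (hd.pow 2).congr_deriv ?_
    simp only [Nat.cast_ofNat, Nat.reduceSub, pow_one]
    ring
  have hp : HasDerivAt (fun x : ℝ => (x / 2) ^ (μ + 1))
      (1 / 2 * (μ + 1) * (x / 2) ^ μ) x := by
    simpa using hd.rpow_const (p := μ + 1) (Or.inl (by positivity))
  have h := hp.mul ((hasDerivAt_Phi ha' (show 0 < (μ + ν + 1) / 2 + 1 by linarith)
    ((x / 2) ^ 2)).comp x hsq)
  have e := dPhi_right ha' hb' ((x / 2) ^ 2)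
  have hf : lom μ ν = fun x => (x / 2) ^ (μ + 1) *
      Phi ((μ - ν + 3) / 2) ((μ + ν + 1) / 2 + 1) ((x / 2) ^ 2) := by
    funext x
    rw [lom, show (μ + ν + 1) / 2 + 1 = (μ + ν + 3) / 2 by ring]
  rw [hf]
  refine h.congr_deriv ?_
  rw [lom, show (μ - 1 - (ν - 1) + 3) / 2 = (μ - ν + 3) / 2 by ring,
    show (μ - 1 + (ν - 1) + 3) / 2 = (μ + ν + 1) / 2 by ring, ← e,
    show μ - 1 + 1 = μ by ring, Real.rpow_add_one (show x / 2 ≠ 0 by positivity)]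
  simp only [Function.comp, Real.rpow_add_one (show x / 2 ≠ 0 by positivity)]
  field_simp
  ring

lemma lom_lt {μ ν x : ℝ} (hν1 : 1 / 2 ≤ ν) (hν2 : ν < μ + 1) (hx : 0 < x) :
    lom μ ν x < lom (μ - 1) (ν - 1) x := by
  have h := key (a := (μ - ν + 1) / 2) (b := (μ + ν + 1) / 2) (y := x / 2)
    (by linarith) (by linarith) (by linarith) (by positivity)
  unfold lom
  rw [show (μ - 1 - (ν - 1) + 3) / 2 = (μ - ν + 1) / 2 + 1 by ring,
    show (μ - 1 + (ν - 1) + 3) / 2 = (μ + ν + 1) / 2 by ring,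
    show (μ - ν + 3) / 2 = (μ - ν + 1) / 2 + 1 by ring,
    show (μ + ν + 3) / 2 = (μ + ν + 1) / 2 + 1 by ring,
    show μ - 1 + 1 = μ by ring, Real.rpow_add_one (by positivity), mul_assoc]
  exact mul_lt_mul_of_pos_left h (by positivity)

/-! ### The weighted integrals -/

/-- The integral of `e^{-βu} u^ν t_{μ+k,ν+k}(u)` over `[0, x]`; the exponent of `u` does not move
with `k`. -/
noncomputable def J (μ ν β : ℝ) (k : ℕ) (x : ℝ) : ℝ :=
  ∫ u in (0:ℝ)..x, Real.exp (-β * u) * u ^ ν * lom (μ + k) (ν + k) u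

section

variable {μ ν : ℝ} (β : ℝ) (hν1 : 1 / 2 ≤ ν) (hν2 : ν < μ + 1)
include hν1 hν2

lemma continuous_integrand (k : ℕ) :
    Continuous fun u : ℝ => Real.exp (-β * u) * u ^ ν * lom (μ + k) (ν + k) u := by
  have hk : (0 : ℝ) ≤ k := k.cast_nonneg
  have h1 : Continuous fun y : ℝ => y ^ ν := Real.continuous_rpow_const (by linarith)
  have h2 := continuous_lom (μ := μ + k) (ν := ν + k) (by linarith) (by linarith) (by linarith)
  fun_prop

lemma hasDerivAt_J (k : ℕ) (x : ℝ) :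
    HasDerivAt (J μ ν β k) (Real.exp (-β * x) * x ^ ν * lom (μ + k) (ν + k) x) x :=
  ((continuous_integrand β hν1 hν2 k).integral_hasStrictDerivAt 0 x).hasDerivAt

lemma J_nonneg (k : ℕ) {x : ℝ} (hx : 0 < x) : 0 ≤ J μ ν β k x := by
  have hk : (0 : ℝ) ≤ k := k.cast_nonneg
  refine intervalIntegral.integral_nonneg hx.le fun u hu => ?_
  have hl : 0 ≤ lom (μ + k) (ν + k) u :=
    mul_nonneg (Real.rpow_nonneg (by linarith [hu.1]) _)
      (Phi_pos (by linarith) (by linarith) (sq_nonneg _)).le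
  have := Real.rpow_nonneg hu.1 ν
  positivity

lemma hasDerivAt_weighted (k : ℕ) {x : ℝ} (hx : 0 < x) :
    HasDerivAt (fun u : ℝ => Real.exp (-β * u) * u ^ ν * lom (μ + k) (ν + k) u)
      (Real.exp (-β * x) * x ^ ν * (lom (μ + k - 1) (ν + k - 1) x
        - β * lom (μ + k) (ν + k) x - k / x * lom (μ + k) (ν + k) x)) x := by
  have hk : (0 : ℝ) ≤ k := k.cast_nonneg
  have he : HasDerivAt (fun w : ℝ => Real.exp (-β * w)) (Real.exp (-β * x) * -β) x := by
    simpa using ((hasDerivAt_id x).const_mul (-β)).exp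
  have hp : HasDerivAt (fun w : ℝ => w ^ ν) (ν * (x ^ ν / x)) x := by
    have := Real.hasDerivAt_rpow_const (x := x) (p := ν) (Or.inl hx.ne')
    rwa [Real.rpow_sub_one hx.ne'] at this
  have hl := hasDerivAt_lom (μ := μ + k) (ν := ν + k) (by linarith) (by linarith) hx
  refine ((he.mul hp).mul hl).congr_deriv ?_
  simp only [Pi.mul_apply]
  field_simp
  ring

/-- One step of the telescoping: the difference of the two sides vanishes at `0` and has derivative
`e^{-βx} x^ν ((k+1)/x) t_{μ+k+1,ν+k+1}(x) > 0`. -/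
lemma step (k : ℕ) {x : ℝ} (hx : 0 < x) :
    Real.exp (-β * x) * x ^ ν * lom (μ + (k + 1 : ℕ)) (ν + (k + 1 : ℕ)) x <
      J μ ν β k x - β * J μ ν β (k + 1) x := by
  set H : ℝ → ℝ := fun x => J μ ν β k x - β * J μ ν β (k + 1) x -
    Real.exp (-β * x) * x ^ ν * lom (μ + (k + 1 : ℕ)) (ν + (k + 1 : ℕ)) x with hH
  have hk : (0 : ℝ) ≤ k := k.cast_nonneg
  have hJ := fun (k : ℕ) => continuous_iff_continuousAt.2 fun z =>
    (hasDerivAt_J β hν1 hν2 k z).continuousAt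
  have hcont : Continuous H :=
    ((hJ k).sub ((hJ (k + 1)).const_mul β)).sub (continuous_integrand β hν1 hν2 (k + 1))
  have hmono : StrictMonoOn H (Set.Ici 0) := by
    refine strictMonoOn_of_deriv_pos (convex_Ici 0) hcont.continuousOn fun w hw => ?_
    rw [interior_Ici] at hw
    have hw : 0 < w := hw
    have hd := ((hasDerivAt_J β hν1 hν2 k w).sub
      ((hasDerivAt_J β hν1 hν2 (k + 1) w).const_mul β)).sub
      (hasDerivAt_weighted β hν1 hν2 (k + 1) hw)
    have hpos := lom_pos (μ := μ + (k + 1 : ℕ)) (ν := ν + (k + 1 : ℕ)) (x := w)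
      (by linarith) (by push_cast; linarith) hw
    have e : deriv H w = Real.exp (-β * w) * w ^ ν *
        (((k + 1 : ℕ) : ℝ) / w * lom (μ + (k + 1 : ℕ)) (ν + (k + 1 : ℕ)) w) := by
      refine hd.deriv.trans ?_
      rw [show μ + ((k + 1 : ℕ) : ℝ) - 1 = μ + k by push_cast; ring,
        show ν + ((k + 1 : ℕ) : ℝ) - 1 = ν + k by push_cast; ring]
      ring
    rw [e]
    positivity
  have h0 : H 0 = 0 := by
    simp [hH, J, Real.zero_rpow (show ν ≠ 0 by linarith)]
  have := hmono (Set.mem_Ici.2 le_rfl) (Set.mem_Ici.2 hx.le) hx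
  rw [h0] at this
  simp only [hH] at this
  linarith

/-- The telescoped sum of `step`. The term `k = 0` is kept exactly rather than estimated, so that the
strict inequality of `step` at `k = 0` remains available after the passage to the limit. -/
lemma partial_sum (n : ℕ) {x : ℝ} (hx : 0 < x) (hβ : 0 < β) :
    ∑ k ∈ Finset.range (n + 1), β ^ k *
      (Real.exp (-β * x) * x ^ ν * lom (μ + (k + 1 : ℕ)) (ν + (k + 1 : ℕ)) x) ≤
    Real.exp (-β * x) * x ^ ν * lom (μ + (0 + 1 : ℕ)) (ν + (0 + 1 : ℕ)) x + β * J μ ν β 1 x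
      - β ^ (n + 1) * J μ ν β (n + 1) x := by
  induction n with
  | zero => simp
  | succ n ih =>
    rw [Finset.sum_range_succ]
    have h := mul_le_mul_of_nonneg_left (step β hν1 hν2 (n + 1) hx).le
      (pow_pos hβ (n + 1)).le
    rw [pow_succ β (n + 1)]
    linarith

/-- The upper bound, cleared of denominators: the right side minus the left side vanishes at `0` and
has derivative `e^{-βx} x^ν (t_{μ-1,ν-1} - t_{μ,ν})(x) > 0`. -/
lemma upper {x : ℝ} (hx : 0 < x) :
    (1 - β) * J μ ν β 0 x < Real.exp (-β * x) * x ^ ν * lom μ ν x := by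
  set K : ℝ → ℝ := fun x => Real.exp (-β * x) * x ^ ν * lom (μ + (0 : ℕ)) (ν + (0 : ℕ)) x
    - (1 - β) * J μ ν β 0 x with hK
  have hJ := continuous_iff_continuousAt.2 fun z =>
    (hasDerivAt_J β hν1 hν2 0 z).continuousAt
  have hcont : Continuous K := (continuous_integrand β hν1 hν2 0).sub (hJ.const_mul _)
  have hmono : StrictMonoOn K (Set.Ici 0) := by
    refine strictMonoOn_of_deriv_pos (convex_Ici 0) hcont.continuousOn fun w hw => ?_
    rw [interior_Ici] at hw
    have hw : 0 < w := hw
    have hd := (hasDerivAt_weighted β hν1 hν2 0 hw).sub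
      ((hasDerivAt_J β hν1 hν2 0 w).const_mul (1 - β))
    have e : deriv K w = Real.exp (-β * w) * w ^ ν *
        (lom (μ - 1) (ν - 1) w - lom μ ν w) := by
      refine hd.deriv.trans ?_
      simp only [Nat.cast_zero, add_zero]
      ring
    rw [e]
    have := sub_pos.2 (lom_lt hν1 hν2 hw)
    positivity
  have h0 : K 0 = 0 := by
    simp [hK, J, Real.zero_rpow (show ν ≠ 0 by linarith)]
  have := hmono (Set.mem_Ici.2 le_rfl) (Set.mem_Ici.2 hx.le) hx
  rw [h0] at this
  simp only [hK, Nat.cast_zero, add_zero] at this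
  linarith

end

end LommelAux

open LommelAux

theorem stmt18 (μ ν β : ℝ) (hμ : μ > -1/2) (hν1 : 1/2 ≤ ν) (hν2 : ν < μ + 1)
    (hβ1 : 0 < β) (hβ2 : β < 1) :
    ∀ x : ℝ, 0 < x →
      (∑' k : ℕ, β ^ k * lommel (μ + (k : ℝ) + 1) (ν + (k : ℝ) + 1) x <
        Real.exp (β * x) / x ^ ν *
          ∫ u in (0:ℝ)..x, Real.exp (-β * u) * u ^ ν * lommel μ ν u) ∧
      Real.exp (β * x) / x ^ ν *
          ∫ u in (0:ℝ)..x, Real.exp (-β * u) * u ^ ν * lommel μ ν u <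
        lommel μ ν x / (1 - β) := by
  intro x hx
  have hI : (∫ u in (0:ℝ)..x, Real.exp (-β * u) * u ^ ν * lommel μ ν u) = J μ ν β 0 x := by
    refine intervalIntegral.integral_congr fun u hu => ?_
    rw [Set.uIcc_of_le hx.le] at hu
    simp only [Nat.cast_zero, add_zero]
    rw [lommel_eq (by linarith) hu.1]
  set c : ℝ := Real.exp (-β * x) * x ^ ν with hc
  have hcpos : 0 < c := by positivity
  have hcinv : Real.exp (β * x) / x ^ ν = 1 / c := by
    rw [hc, neg_mul, Real.exp_neg]
    field_simp
  have hterm : ∀ k : ℕ, lommel (μ + (k : ℝ) + 1) (ν + (k : ℝ) + 1) x =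
      lom (μ + (k + 1 : ℕ)) (ν + (k + 1 : ℕ)) x := by
    intro k
    have hk : (0 : ℝ) ≤ k := k.cast_nonneg
    rw [lommel_eq (by linarith) hx.le]
    push_cast
    rw [add_assoc, add_assoc]
  rw [hI, hcinv, lommel_eq (by linarith) hx.le]
  constructor
  · simp_rw [hterm]
    have h0 := step β hν1 hν2 0 hx
    -- The intermediate bound is below `J_0(x) / c` by exactly the gap in `step` at `k = 0`.
    refine lt_of_le_of_lt (b := 1 / c * (c * lom (μ + (0 + 1 : ℕ)) (ν + (0 + 1 : ℕ)) x
      + β * J μ ν β 1 x)) ?_ ?_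
    · have hpos : ∀ k : ℕ, 0 ≤ β ^ k * lom (μ + (k + 1 : ℕ)) (ν + (k + 1 : ℕ)) x := by
        intro k
        have hk : (0 : ℝ) ≤ k := k.cast_nonneg
        have := lom_pos (μ := μ + (k + 1 : ℕ)) (ν := ν + (k + 1 : ℕ)) (x := x)
          (by linarith) (by push_cast; linarith) hx
        positivity
      refine Real.tsum_le_of_sum_range_le hpos fun n => ?_
      refine (Finset.sum_le_sum_of_subset_of_nonneg
        (Finset.range_mono n.le_succ) fun k _ _ => hpos k).trans ?_
      have h := partial_sum β hν1 hν2 n hx hβ1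
      have hJ := mul_nonneg (pow_pos hβ1 (n + 1)).le (J_nonneg β hν1 hν2 (n + 1) hx)
      rw [one_div, ← div_eq_inv_mul, le_div_iff₀ hcpos, Finset.sum_mul]
      calc _ = ∑ k ∈ Finset.range (n + 1), β ^ k *
            (c * lom (μ + (k + 1 : ℕ)) (ν + (k + 1 : ℕ)) x) :=
            Finset.sum_congr rfl fun k _ => by ring
        _ ≤ _ := by linarith
    · refine mul_lt_mul_of_pos_left ?_ (by positivity)
      simp only [zero_add] at h0 ⊢
      linarith
  · have h := upper β hν1 hν2 hx
    rw [lt_div_iff₀ (by linarith), one_div, ← div_eq_inv_mul, div_mul_eq_mul_div,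
      div_lt_iff₀ hcpos]
    linarith
end

section
/- Let ν > −1/2 and 0 < β < 1, and set C_ν = 2(ν+1) if ν ≥ 1/2 and C_ν = 2ν+3+√(2(2ν+3)) if |ν| < 1/2. Then for all x > 0, ∫_0^x e^{−βu} u^ν L_ν(u) du < (C_ν/((2ν+1)(1−β))) · e^{−βx} x^ν L_ν(x). -/
/-!
Put `a = ν + 1 / 2` and `h(x) = x ^ ν * L_ν(x) = x ^ (2 a) * ∑ c_k x ^ (2 k)`, where
`c_k = (2 k + 3) (2 k + 2 + 2 a) c_(k + 1)`. The whole argument rests on a lower bound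
`h' / h ≥ 1 - q / x` for all `x > 0`, with `q = 0` if `a ≥ 1` (`ratio_large`) and `q = 1 - a / 2`
if `0 < a < 1` (`ratio_small`).

The modified Struve equation `h'' = h - (2 (1 - a) / x) h' + S` with `S > 0` makes `h' / h` a
supersolution of a Riccati equation for which `1 - q / x` is a subsolution once `x` is not small;
in linear form, an integrating factor shows that `h' - (1 - q / x) h`, once nonnegative, stays
nonnegative (`ratio_propagate`). For small `x` the bound is read off from the series: `x h' / h` is
at least `2 a` (`two_a_mul_hh_le`), and at least the same quotient formed with the first two terms
only (`hh_two_terms`).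

Given the bound, with `γ = 1 - β` the function `w(x) e ^ (-β x) h(x) - ∫₀ˣ e ^ (-β u) h(u) du` is
increasing for `w(x) = x / (1 - q)`, and also for the constant `w = 1 / ((1 - q) γ)` when
`x ≥ 1 / γ`. Hence the integral is at most `e ^ (-β x) h(x) / ((1 - q) γ)` (`integral_le`), and
`1 / (1 - q)`, which is `1` or `4 / (2 ν + 1)`, is smaller than `C_ν / (2 ν + 1)`.
-/

open Real MeasureTheory

/-- Modified Struve function of the first kind. -/
noncomputable def struveL (ν x : ℝ) : ℝ :=
  ∑' k : ℕ, (x / 2) ^ (ν + 2 * (k : ℝ) + 1) /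
    (Real.Gamma ((k : ℝ) + 3 / 2) * Real.Gamma ((k : ℝ) + ν + 3 / 2))


/-! ### Even power series with infinite radius of convergence -/

theorem summable_nat_mul {e : ℕ → ℝ} (he : ∀ R : ℝ, 0 ≤ R → Summable fun k => |e k| * R ^ k)
    (R : ℝ) (hR : 0 ≤ R) : Summable fun k : ℕ => |e k| * (2 * (k : ℝ)) * R ^ k := by
  refine Summable.of_nonneg_of_le (fun k => by positivity) (fun k => ?_)
    ((he (2 * R) (by positivity)).mul_left 2)
  have h1 : (k : ℝ) ≤ 2 ^ k := by exact_mod_cast Nat.lt_two_pow_self.le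
  rw [mul_pow]
  have : 0 ≤ |e k| * R ^ k := by positivity
  nlinarith

theorem summable_even {e : ℕ → ℝ} (he : ∀ R : ℝ, 0 ≤ R → Summable fun k => |e k| * R ^ k)
    (x : ℝ) : Summable fun k => e k * x ^ (2 * k) := by
  refine Summable.of_norm ((he (x ^ 2) (by positivity)).congr fun k => ?_)
  rw [norm_mul, Real.norm_eq_abs, pow_mul, norm_of_nonneg (by positivity)]

/-- Termwise differentiation of an even power series; the derivative is written as `1 / x` times
an even series, so that odd powers never appear. -/
theorem hasDerivAt_even {e : ℕ → ℝ} (he : ∀ R : ℝ, 0 ≤ R → Summable fun k => |e k| * R ^ k)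
    {x : ℝ} (hx : x ≠ 0) :
    HasDerivAt (fun y => ∑' k, e k * y ^ (2 * k)) ((∑' k : ℕ, (e k * (2 * k)) * x ^ (2 * k)) / x) x := by
  set R : ℝ := |x| + 1 with hR
  have hR1 : 1 ≤ R := by have := abs_nonneg x; linarith
  have hxR : |x| < R := by linarith
  have key := hasDerivAt_tsum_of_isPreconnected
    (u := fun k : ℕ => |e k| * (2 * (k : ℝ)) * (R ^ 2) ^ k)
    (g := fun (k : ℕ) (y : ℝ) => e k * y ^ (2 * k))
    (g' := fun (k : ℕ) (y : ℝ) => e k * (((2 * k : ℕ) : ℝ) * y ^ (2 * k - 1)))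
    (t := Metric.ball 0 R) (y₀ := 0) (y := x)
    (summable_nat_mul he _ (by positivity)) Metric.isOpen_ball
    (convex_ball (0 : ℝ) R).isPreconnected
    (fun k y _ => (hasDerivAt_pow (2 * k) y).const_mul (e k))
    (fun k y hy => by
      have hy' : |y| < R := by simpa using hy
      rw [norm_mul, norm_mul, norm_pow, Real.norm_eq_abs, Real.norm_eq_abs, Real.norm_eq_abs,
        abs_of_nonneg (by positivity : (0:ℝ) ≤ ((2 * k : ℕ) : ℝ)), mul_assoc, ← pow_mul]
      push_cast
      gcongr ?_ * (?_ * ?_)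
      calc |y| ^ (2 * k - 1) ≤ R ^ (2 * k - 1) := by gcongr
        _ ≤ R ^ (2 * k) := pow_le_pow_right₀ hR1 (by omega))
    (by simpa using by linarith) (summable_even he 0) (by simpa using hxR)
  refine key.congr_deriv ?_
  rw [← tsum_div_const]
  congr 1
  ext k
  rcases k with _ | k
  · simp
  · rw [show 2 * (k + 1) - 1 = 2 * k + 1 by omega, show 2 * (k + 1) = 2 * k + 1 + 1 by ring,
      pow_succ x (2 * k + 1)]
    push_cast
    field_simp
    ring

section Series

/-! ### The function `x ^ ν * L_ν(x)` and its differential equation -/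

variable {a : ℝ} {c : ℕ → ℝ}

/-- The recurrence forces `c k ≤ c 0 / k!`, so every weighted series converges. -/
theorem summable_coeff (ha : 0 < a) (hc : ∀ k, 0 < c k)
    (hrec : ∀ k : ℕ, c k = (2 * k + 3) * (2 * k + 2 + 2 * a) * c (k + 1)) (R : ℝ) (hR : 0 ≤ R) :
    Summable fun k => |c k| * R ^ k := by
  have hle : ∀ k : ℕ, c k ≤ c 0 / k.factorial := by
    intro k
    induction k with
    | zero => simp
    | succ k ih =>
      have h1 : c (k + 1) ≤ c k / (k + 1) := by
        rw [le_div_iff₀ (by positivity), hrec k]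
        have := hc (k + 1)
        have hk : (0 : ℝ) ≤ k := by positivity
        have : ((k : ℝ) + 1) ≤ (2 * k + 3) * (2 * k + 2 + 2 * a) := by nlinarith
        nlinarith
      calc c (k + 1) ≤ c k / (k + 1) := h1
        _ ≤ c 0 / k.factorial / (k + 1) := by gcongr
        _ = c 0 / (k + 1).factorial := by
          rw [Nat.factorial_succ]; push_cast; field_simp
  refine Summable.of_nonneg_of_le (fun k => by positivity) (fun k => ?_)
    ((Real.summable_pow_div_factorial R).mul_left (c 0))
  rw [abs_of_pos (hc k)]
  calc c k * R ^ k ≤ c 0 / k.factorial * R ^ k := by gcongr; exact hle k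
    _ = _ := by ring

theorem summable_coeff' (ha : 0 < a) (hc : ∀ k, 0 < c k)
    (hrec : ∀ k : ℕ, c k = (2 * k + 3) * (2 * k + 2 + 2 * a) * c (k + 1)) (R : ℝ) (hR : 0 ≤ R) :
    Summable fun k : ℕ => |(2 * a + 2 * k) * c k| * R ^ k := by
  have h0 := summable_coeff ha hc hrec
  refine (((h0 R hR).mul_left (2 * a)).add (summable_nat_mul h0 R hR)).congr fun k => ?_
  rw [abs_mul, abs_of_pos (by positivity : 0 < 2 * a + 2 * (k : ℝ))]
  ring

/-- The function `x ^ (2 * a) * ∑ c k * x ^ (2 * k)`; with `a = ν + 1 / 2` and the Struve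
coefficients this is `x ^ ν * L_ν(x)`. -/
noncomputable def hh (a : ℝ) (c : ℕ → ℝ) (x : ℝ) : ℝ := x ^ (2 * a) * ∑' k, c k * x ^ (2 * k)

/-- The termwise derivative of `hh a c`. -/
noncomputable def hd (a : ℝ) (c : ℕ → ℝ) (x : ℝ) : ℝ :=
  x ^ (2 * a - 1) * ∑' k : ℕ, ((2 * a + 2 * k) * c k) * x ^ (2 * k)

theorem hh_pos (ha : 0 < a) (hc : ∀ k, 0 < c k)
    (hrec : ∀ k : ℕ, c k = (2 * k + 3) * (2 * k + 2 + 2 * a) * c (k + 1)) {x : ℝ} (hx : 0 < x) :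
    0 < hh a c x := by
  refine mul_pos (rpow_pos_of_pos hx _) ?_
  exact (summable_even (summable_coeff ha hc hrec) x).tsum_pos
    (fun k => by have := hc k; positivity) 0 (by have := hc 0; positivity)

theorem hh_hasDerivAt (ha : 0 < a) (hc : ∀ k, 0 < c k)
    (hrec : ∀ k : ℕ, c k = (2 * k + 3) * (2 * k + 2 + 2 * a) * c (k + 1)) {x : ℝ} (hx : 0 < x) :
    HasDerivAt (hh a c) (hd a c x) x := by
  have h0 := summable_coeff ha hc hrec
  have h1 := (hasDerivAt_rpow_const (p := 2 * a) (Or.inl hx.ne')).mul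
    (hasDerivAt_even h0 hx.ne')
  refine h1.congr_deriv ?_
  have e1 : ∑' k : ℕ, ((2 * a + 2 * k) * c k) * x ^ (2 * k) =
      2 * a * (∑' k, c k * x ^ (2 * k)) + ∑' k : ℕ, (c k * (2 * k)) * x ^ (2 * k) := by
    have s2 : Summable fun k : ℕ => (c k * (2 * k)) * x ^ (2 * k) := by
      refine summable_even (e := fun k : ℕ => c k * (2 * k)) (fun R hR => ?_) x
      refine (summable_nat_mul h0 R hR).congr fun k => ?_
      rw [abs_mul, abs_of_nonneg (by positivity : (0:ℝ) ≤ 2 * (k:ℝ))]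
    rw [← tsum_mul_left, ← ((summable_even h0 x).mul_left _).tsum_add s2]
    congr 1; ext k; ring
  rw [hd, e1, rpow_sub_one hx.ne']
  field_simp

/-- The modified Struve equation for `hh a c`, with its positive inhomogeneous term. -/
theorem hd_hasDerivAt (ha : 0 < a) (hc : ∀ k, 0 < c k)
    (hrec : ∀ k : ℕ, c k = (2 * k + 3) * (2 * k + 2 + 2 * a) * c (k + 1)) {x : ℝ} (hx : 0 < x) :
    HasDerivAt (hd a c)
      (hh a c x - 2 * (1 - a) / x * hd a c x + 2 * a * c 0 * x ^ (2 * a) / x ^ 2) x := by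
  have h0 := summable_coeff ha hc hrec
  have h1 := summable_coeff' ha hc hrec
  have h2 := (hasDerivAt_rpow_const (p := 2 * a - 1) (Or.inl hx.ne')).mul
    (hasDerivAt_even h1 hx.ne')
  refine h2.congr_deriv ?_
  have s2 : Summable fun k : ℕ => (((2 * a + 2 * k) * c k) * (2 * k)) * x ^ (2 * k) := by
    refine summable_even (e := fun k : ℕ => ((2 * a + 2 * k) * c k) * (2 * k)) (fun R hR => ?_) x
    refine (summable_nat_mul h1 R hR).congr fun k => ?_
    rw [abs_mul (_ * _), abs_of_nonneg (by positivity : (0:ℝ) ≤ 2 * (k:ℝ))]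
  have e1 : ∑' k : ℕ, (((2 * a + 2 * k) * c k) * (2 * k)) * x ^ (2 * k) +
      ∑' k : ℕ, ((2 * a + 2 * k) * c k) * x ^ (2 * k) =
      2 * a * c 0 + x ^ 2 * ∑' k, c k * x ^ (2 * k) := by
    rw [← s2.tsum_add (summable_even h1 x), (s2.add (summable_even h1 x)).tsum_eq_zero_add,
      ← tsum_mul_left]
    congr 1
    · simp
    · congr 1; ext k
      rw [hrec k]; push_cast; ring
  have e2 := eq_sub_of_add_eq e1
  rw [e2, hd, hh, rpow_sub_one hx.ne', rpow_sub_one hx.ne']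
  field_simp
  ring

theorem mul_hd {x : ℝ} (hx : 0 < x) :
    x * hd a c x = x ^ (2 * a) * ∑' k : ℕ, ((2 * a + 2 * k) * c k) * x ^ (2 * k) := by
  rw [hd, rpow_sub_one hx.ne', ← mul_assoc, mul_div_cancel₀ _ hx.ne']

theorem two_a_mul_hh_le (ha : 0 < a) (hc : ∀ k, 0 < c k)
    (hrec : ∀ k : ℕ, c k = (2 * k + 3) * (2 * k + 2 + 2 * a) * c (k + 1)) {x : ℝ} (hx : 0 < x) :
    2 * a * hh a c x ≤ x * hd a c x := by
  have h0 := summable_even (summable_coeff ha hc hrec) x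
  have h1 := summable_even (summable_coeff' ha hc hrec) x
  have : 2 * a * (∑' k, c k * x ^ (2 * k)) ≤
      ∑' k : ℕ, ((2 * a + 2 * k) * c k) * x ^ (2 * k) := by
    rw [← tsum_mul_left]
    refine (h0.mul_left _).tsum_le_tsum (fun k => ?_) h1
    have : 0 ≤ 2 * (k : ℝ) * (c k * x ^ (2 * k)) := by have := hc k; positivity
    nlinarith
  have := mul_le_mul_of_nonneg_left this (rpow_pos_of_pos hx (2 * a)).le
  rw [mul_hd hx, hh]
  linarith

/-- Lower bound for `x * h' / h` by the same quotient for the first two terms of the series. -/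
theorem hh_two_terms (ha : 0 < a) (hc : ∀ k, 0 < c k)
    (hrec : ∀ k : ℕ, c k = (2 * k + 3) * (2 * k + 2 + 2 * a) * c (k + 1)) {x : ℝ} (hx : 0 < x) :
    (2 * a + x ^ 2 / 3) * hh a c x ≤ (1 + x ^ 2 / (6 * (1 + a))) * (x * hd a c x) := by
  have h0 := summable_even (summable_coeff ha hc hrec) x
  have h1 := summable_even (summable_coeff' ha hc hrec) x
  set s : ℝ := x ^ 2 / (6 * (1 + a)) with hs
  have hs0 : 0 ≤ s := by positivity
  have hs2 : x ^ 2 = 6 * (1 + a) * s := by rw [hs]; field_simp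
  have hsum := (h1.mul_left (1 + s)).sub (h0.mul_left (2 * a + x ^ 2 / 3))
  have hnn : 0 ≤ ∑' k : ℕ, ((1 + s) * (((2 * a + 2 * k) * c k) * x ^ (2 * k)) -
      (2 * a + x ^ 2 / 3) * (c k * x ^ (2 * k))) := by
    refine le_trans (le_of_eq ?_) (hsum.sum_le_tsum (Finset.range 2) fun k hk => ?_)
    · have := hrec 0
      simp only [Finset.sum_range_succ, Finset.sum_range_zero]
      rw [this]
      push_cast
      simp only [hs2, mul_one, pow_zero, mul_zero]
      ring
    · have hk2 : (2 : ℝ) ≤ k := by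
        have : 2 ≤ k := not_lt.1 (by simpa using hk)
        exact_mod_cast this
      have ht : 0 ≤ c k * x ^ (2 * k) := by have := hc k; positivity
      have : 0 ≤ (2 * k + s * (2 * k - 2)) * (c k * x ^ (2 * k)) := by
        refine mul_nonneg ?_ ht
        have : 0 ≤ s * (2 * k - 2) := mul_nonneg hs0 (by linarith)
        linarith
      rw [hs2]
      linarith
  rw [(h1.mul_left _).tsum_sub (h0.mul_left _), tsum_mul_left, tsum_mul_left] at hnn
  have := mul_nonneg (rpow_pos_of_pos hx (2 * a)).le hnn
  rw [mul_hd hx, hh]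
  linarith

/-! ### Lower bounds for the logarithmic derivative -/

/-- Comparison principle for the Riccati equation of `h' / h`: if the subsolution inequality holds
for `1 - q / x` beyond `x₁`, a lower bound at `x₁` propagates to the right. -/
theorem ratio_propagate (ha : 0 < a) (hc : ∀ k, 0 < c k)
    (hrec : ∀ k : ℕ, c k = (2 * k + 3) * (2 * k + 2 + 2 * a) * c (k + 1)) {q x₁ : ℝ}
    (hx₁ : 0 < x₁) (h₁ : (1 - q / x₁) * hh a c x₁ ≤ hd a c x₁)
    (hq : ∀ x, x₁ ≤ x → q * (1 + q - 2 * (1 - a)) ≤ 2 * (q - (1 - a)) * x) {x : ℝ}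
    (hx : x₁ ≤ x) : (1 - q / x) * hh a c x ≤ hd a c x := by
  -- The integrating factor `e ^ x * x ^ (2 * (1 - a) - q)` removes the damping term.
  set m : ℝ := 2 * (1 - a) - q with hm
  set W : ℝ → ℝ := fun y => (hd a c y - (1 - q / y) * hh a c y) * (exp y * y ^ m) with hW
  have hder : ∀ y, 0 < y → HasDerivAt W
      (exp y * y ^ m * ((2 * (q - (1 - a)) * y - q * (1 + q - 2 * (1 - a))) / y ^ 2 * hh a c y +
        2 * a * c 0 * y ^ (2 * a) / y ^ 2)) y := by
    intro y hy
    have hρ : HasDerivAt (fun y : ℝ => 1 - q / y) (q / y ^ 2) y := by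
      have := ((hasDerivAt_inv hy.ne').const_mul q).const_sub 1
      simpa [div_eq_mul_inv] using this
    have := ((hd_hasDerivAt ha hc hrec hy).sub (hρ.mul (hh_hasDerivAt ha hc hrec hy))).mul
      ((Real.hasDerivAt_exp y).mul (hasDerivAt_rpow_const (p := m) (Or.inl hy.ne')))
    refine this.congr_deriv ?_
    simp only [Pi.sub_apply, Pi.mul_apply]
    rw [rpow_sub_one hy.ne', hm]
    field_simp
    ring
  have hmono : MonotoneOn W (Set.Ici x₁) := by
    refine monotoneOn_of_deriv_nonneg (convex_Ici _)
      (fun y hy => (hder y (hx₁.trans_le hy)).continuousAt.continuousWithinAt)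
      (fun y hy => ?_) (fun y hy => ?_)
    · rw [interior_Ici] at hy
      exact (hder y (hx₁.trans hy)).differentiableAt.differentiableWithinAt
    · rw [interior_Ici] at hy
      have hy0 : 0 < y := hx₁.trans hy
      rw [(hder y hy0).deriv]
      have hh0 := (hh_pos ha hc hrec hy0).le
      have := hc 0
      have hb : 0 ≤ 2 * (q - (1 - a)) * y - q * (1 + q - 2 * (1 - a)) := by
        linarith [hq y (le_of_lt hy)]
      positivity
  have hx0 : 0 < x := hx₁.trans_le hx
  have hle : W x₁ ≤ W x := hmono Set.self_mem_Ici hx hx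
  have hW1 : 0 ≤ W x₁ := mul_nonneg (by linarith) (by positivity)
  have := nonneg_of_mul_nonneg_left (hW1.trans hle) (by positivity : 0 < exp x * x ^ m)
  linarith

/-- For `a ≥ 1`, `h ≤ h'`; that is, `L_ν ≤ L_(ν - 1)` for `ν ≥ 1 / 2`. -/
theorem ratio_large (ha : 1 ≤ a) (hc : ∀ k, 0 < c k)
    (hrec : ∀ k : ℕ, c k = (2 * k + 3) * (2 * k + 2 + 2 * a) * c (k + 1)) {x : ℝ} (hx : 0 < x) :
    (1 - 0 / x) * hh a c x ≤ hd a c x := by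
  have ha0 : 0 < a := by linarith
  have hsmall : ∀ y, 0 < y → y ≤ 2 → (1 - 0 / y) * hh a c y ≤ hd a c y := by
    intro y hy hy2
    have h1 := two_a_mul_hh_le ha0 hc hrec hy
    have h2 := hh_pos ha0 hc hrec hy
    have : y * hh a c y ≤ y * hd a c y := by nlinarith
    simpa using le_of_mul_le_mul_left this hy
  rcases le_total x 2 with h | h
  · exact hsmall x hx h
  · refine ratio_propagate ha0 hc hrec two_pos (hsmall 2 two_pos le_rfl) (fun y hy => ?_) h
    nlinarith

/-- For `0 < a < 1` the ratio `h' / h` behaves like `1 - (1 - a) / x` at infinity; the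
weaker constant `1 - a / 2` holds for every `x`. -/
theorem ratio_small (ha : 0 < a) (ha1 : a < 1) (hc : ∀ k, 0 < c k)
    (hrec : ∀ k : ℕ, c k = (2 * k + 3) * (2 * k + 2 + 2 * a) * c (k + 1)) {x : ℝ} (hx : 0 < x) :
    (1 - (1 - a / 2) / x) * hh a c x ≤ hd a c x := by
  have hsmall : ∀ y, 0 < y → y ≤ 3 / 2 → (1 - (1 - a / 2) / y) * hh a c y ≤ hd a c y := by
    intro y hy hy2
    have h1 := hh_two_terms ha hc hrec hy
    have h2 := hh_pos ha hc hrec hy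
    set s : ℝ := y ^ 2 / (6 * (1 + a)) with hs
    have hs0 : 0 ≤ s := by positivity
    have hs1 : s ≤ y ^ 2 / 6 := by
      rw [hs]; gcongr; linarith
    have hpoly : (y - 1 + a / 2) * (1 + s) ≤ 2 * a + y ^ 2 / 3 := by
      have hy4 : y ^ 2 / 6 ≤ 3 / 8 := by nlinarith
      rcases le_total (y - 1 + a / 2) 0 with h | h
      · have : (y - 1 + a / 2) * (1 + s) ≤ 0 := mul_nonpos_of_nonpos_of_nonneg h (by linarith)
        nlinarith [sq_nonneg y]
      · calc (y - 1 + a / 2) * (1 + s) ≤ (y - 1 + a / 2) * (1 + y ^ 2 / 6) := by gcongr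
          _ = (y - 1) * (1 + y ^ 2 / 6) + a / 2 * (1 + y ^ 2 / 6) := by ring
          _ ≤ y ^ 2 / 3 + 2 * a := by
            have e1 : a / 2 * (1 + y ^ 2 / 6) ≤ 2 * a := by nlinarith
            have e2 : (y - 1) * (1 + y ^ 2 / 6) ≤ y ^ 2 / 3 := by
              nlinarith [mul_nonneg (sub_nonneg.2 hy2) (sq_nonneg (y - 3 / 4)),
                mul_nonneg (sub_nonneg.2 hy2) hy.le, sub_nonneg.2 hy2]
            linarith
          _ = _ := by ring
    have h3 : (1 + s) * ((y - 1 + a / 2) * hh a c y) ≤ (1 + s) * (y * hd a c y) := by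
      refine le_trans ?_ h1
      have := mul_le_mul_of_nonneg_right hpoly h2.le
      linarith
    have h4 := le_of_mul_le_mul_left h3 (by linarith)
    refine le_of_mul_le_mul_left (a := y) ?_ hy
    convert h4 using 1
    field_simp
    ring
  rcases le_total x (3 / 2) with h | h
  · exact hsmall x hx h
  · refine ratio_propagate ha hc hrec (by norm_num) (hsmall _ (by norm_num) le_rfl)
      (fun y hy => ?_) h
    nlinarith [mul_nonneg ha.le (sub_nonneg.2 hy), mul_pos ha ha]

/-! ### The integral inequality -/

theorem hh_continuous (ha : 0 < a) (hc : ∀ k, 0 < c k)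
    (hrec : ∀ k : ℕ, c k = (2 * k + 3) * (2 * k + 2 + 2 * a) * c (k + 1)) :
    ContinuousOn (hh a c) (Set.Ici 0) := by
  have h0 := summable_coeff ha hc hrec
  have hpow : Continuous fun x : ℝ => x ^ (2 * a) := continuous_rpow_const (by positivity)
  refine hpow.continuousOn.mul (Continuous.continuousOn ?_)
  rw [continuous_iff_continuousAt]
  intro x
  have hcont : ContinuousOn (fun y => ∑' k, c k * y ^ (2 * k)) (Metric.ball 0 (|x| + 1)) := by
    refine continuousOn_tsum (u := fun k => |c k| * ((|x| + 1) ^ 2) ^ k) (fun k => by fun_prop)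
      (h0 _ (by positivity)) (fun k y hy => ?_)
    have hy' : |y| < |x| + 1 := by simpa using hy
    rw [norm_mul, norm_pow, Real.norm_eq_abs, Real.norm_eq_abs, ← pow_mul]
    gcongr
  exact hcont.continuousAt (Metric.isOpen_ball.mem_nhds (by simp))

/-- If `h' ≥ (1 - q / x) h` with `q < 1`, then `x / (1 - q)` up to `x = 1 / (1 - β)` and the constant
`1 / ((1 - q) (1 - β))` afterwards are admissible factors in front of `e ^ (-β x) h(x)`. -/
theorem integral_le (ha : 0 < a) (hc : ∀ k, 0 < c k)
    (hrec : ∀ k : ℕ, c k = (2 * k + 3) * (2 * k + 2 + 2 * a) * c (k + 1)) {q β : ℝ} (hq0 : 0 ≤ q)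
    (hq : q < 1) (hβ : β < 1) (hr : ∀ x, 0 < x → (1 - q / x) * hh a c x ≤ hd a c x)
    {x : ℝ} (hx : 0 < x) :
    ∫ u in (0:ℝ)..x, exp (-β * u) * hh a c u ≤
      1 / ((1 - q) * (1 - β)) * (exp (-β * x) * hh a c x) := by
  have hq' : 0 < 1 - q := by linarith
  have hγ : 0 < 1 - β := by linarith
  set f : ℝ → ℝ := fun u => exp (-β * u) * hh a c u with hf
  have hfc : ContinuousOn f (Set.Ici 0) :=
    (Continuous.continuousOn (by fun_prop)).mul (hh_continuous ha hc hrec)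
  set F : ℝ → ℝ := fun y => ∫ u in (0:ℝ)..y, f u with hF
  have hint : ∀ y, 0 ≤ y → IntervalIntegrable f volume 0 y := fun y hy =>
    (hfc.mono (by rw [Set.uIcc_of_le hy]; exact Set.Icc_subset_Ici_self)).intervalIntegrable
  have hFd : ∀ y, 0 < y → HasDerivAt F (f y) y := fun y hy =>
    intervalIntegral.integral_hasDerivAt_right (hint y hy.le)
      ((hfc.mono Set.Ioi_subset_Ici_self).stronglyMeasurableAtFilter isOpen_Ioi y hy)
      (hfc.continuousAt (Ici_mem_nhds hy))
  have hFc : ContinuousOn F (Set.Ici 0) := by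
    intro y hy
    have hy1 : (0 : ℝ) ≤ y + 1 := by have : (0:ℝ) ≤ y := hy; linarith
    have h1 := intervalIntegral.continuousOn_primitive_interval'
      (hint (y + 1) hy1) Set.left_mem_uIcc y
      (by rw [Set.uIcc_of_le hy1]; exact ⟨hy, by linarith⟩)
    rw [Set.uIcc_of_le hy1] at h1
    refine h1.mono_of_mem_nhdsWithin ?_
    rw [← Set.Ici_inter_Iic]
    exact Filter.inter_mem self_mem_nhdsWithin
      (mem_nhdsWithin_of_mem_nhds (Iic_mem_nhds (by linarith)))
  have hfd : ∀ y, 0 < y → HasDerivAt f (exp (-β * y) * (hd a c y - β * hh a c y)) y := by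
    intro y hy
    have h1 : HasDerivAt (fun u : ℝ => exp (-β * u)) (exp (-β * y) * (-β)) y := by
      simpa using ((hasDerivAt_id y).const_mul (-β)).exp
    refine (h1.mul (hh_hasDerivAt ha hc hrec hy)).congr_deriv ?_
    ring
  -- This holds for every `y > 0`, but the factor `y / (1 - q)` is only useful up to `1 / (1 - β)`.
  have hlin : ∀ y, 0 < y → F y ≤ y / (1 - q) * f y := by
    set G : ℝ → ℝ := fun y => y / (1 - q) * f y - F y with hG
    have hGd : ∀ y, 0 < y → HasDerivAt G (1 / (1 - q) * f y +
        y / (1 - q) * (exp (-β * y) * (hd a c y - β * hh a c y)) - f y) y := fun y hy =>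
      (((hasDerivAt_id y).div_const _).mul (hfd y hy)).sub (hFd y hy)
    have hmono : MonotoneOn G (Set.Ici 0) := by
      refine monotoneOn_of_deriv_nonneg (convex_Ici _)
        (((Continuous.continuousOn (by fun_prop)).mul hfc).sub hFc)
        (fun y hy => ?_) (fun y hy => ?_)
      · rw [interior_Ici] at hy
        exact (hGd y hy).differentiableAt.differentiableWithinAt
      · rw [interior_Ici] at hy
        have hy0 : 0 < y := hy
        rw [(hGd y hy).deriv]
        have h1 := hr y hy
        have h2 := hh_pos ha hc hrec hy
        have h3 : (y - q) * hh a c y ≤ y * hd a c y := by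
          have := mul_le_mul_of_nonneg_left h1 hy0.le
          have e : y * ((1 - q / y) * hh a c y) = (y - q) * hh a c y := by field_simp
          rwa [e] at this
        have h4 : 0 ≤ y * hh a c y * (1 - β) := by positivity
        have : 1 / (1 - q) * f y + y / (1 - q) * (exp (-β * y) * (hd a c y - β * hh a c y)) - f y
            = exp (-β * y) / (1 - q) *
              (q * hh a c y + y * hd a c y - β * (y * hh a c y)) := by
          simp only [hf]; field_simp; ring
        rw [this]
        refine mul_nonneg (by positivity) ?_
        nlinarith
    intro y hy
    have := hmono Set.self_mem_Ici (Set.mem_Ici.2 hy.le) hy.le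
    simp only [hG, hF, intervalIntegral.integral_same] at this
    simp only [hF]
    linarith [show (0:ℝ) / (1 - q) * f 0 = 0 by simp]
  set x₀ : ℝ := 1 / (1 - β) with hx₀
  have hx₀0 : 0 < x₀ := by positivity
  have hM : 1 / ((1 - q) * (1 - β)) = x₀ / (1 - q) := by rw [hx₀]; field_simp
  rw [hM]
  have hfpos : ∀ y, 0 < y → 0 < f y := fun y hy => mul_pos (exp_pos _) (hh_pos ha hc hrec hy)
  change F x ≤ x₀ / (1 - q) * f x
  rcases le_total x x₀ with h | h
  · refine (hlin x hx).trans ?_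
    have := (hfpos x hx).le
    gcongr
  · set G : ℝ → ℝ := fun y => x₀ / (1 - q) * f y - F y with hG
    have hGd : ∀ y, 0 < y → HasDerivAt G
        (x₀ / (1 - q) * (exp (-β * y) * (hd a c y - β * hh a c y)) - f y) y := fun y hy =>
      ((hfd y hy).const_mul _).sub (hFd y hy)
    have hmono : MonotoneOn G (Set.Ici x₀) := by
      refine monotoneOn_of_deriv_nonneg (convex_Ici _)
        (fun y hy => (hGd y (hx₀0.trans_le hy)).continuousAt.continuousWithinAt)
        (fun y hy => ?_) (fun y hy => ?_)
      · rw [interior_Ici] at hy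
        exact (hGd y (hx₀0.trans hy)).differentiableAt.differentiableWithinAt
      · rw [interior_Ici] at hy
        have hy0 : 0 < y := hx₀0.trans hy
        rw [(hGd y hy0).deriv]
        have h1 := hr y hy0
        have h2 := hh_pos ha hc hrec hy0
        have h5 : q / y ≤ q * (1 - β) := by
          rw [div_le_iff₀ hy0]
          have : 1 ≤ (1 - β) * y := by
            have hlt : 1 / (1 - β) < y := hy
            rw [div_lt_iff₀ hγ] at hlt
            linarith
          nlinarith
        have h6 : (1 - q) * (1 - β) * hh a c y ≤ hd a c y - β * hh a c y := by
          have : (1 - q * (1 - β)) * hh a c y ≤ (1 - q / y) * hh a c y := by gcongr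
          nlinarith
        have h7 : x₀ / (1 - q) * (exp (-β * y) * (hd a c y - β * hh a c y)) - f y =
            exp (-β * y) * (1 / ((1 - q) * (1 - β))) *
            (hd a c y - β * hh a c y - (1 - q) * (1 - β) * hh a c y) := by
          rw [← hM]; simp only [hf]; field_simp
        rw [h7]
        exact mul_nonneg (by positivity) (by linarith)
    have h8 : G x₀ ≤ G x := hmono Set.self_mem_Ici h h
    have h9 : 0 ≤ G x₀ := sub_nonneg.2 (hlin x₀ hx₀0)
    exact sub_nonneg.1 (h9.trans h8)

end Series

/-! ### Struve coefficients -/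

/-- The coefficients of `x ^ ν * L_ν(x) = x ^ (2 ν + 1) * ∑ struveCoeff ν k * x ^ (2 k)`. -/
noncomputable def struveCoeff (ν : ℝ) (k : ℕ) : ℝ :=
  (1 / 2) ^ (ν + 2 * (k : ℝ) + 1) /
    (Real.Gamma ((k : ℝ) + 3 / 2) * Real.Gamma ((k : ℝ) + ν + 3 / 2))

theorem struveCoeff_pos {ν : ℝ} (hν : ν > -1/2) (k : ℕ) : 0 < struveCoeff ν k := by
  have hk : (0 : ℝ) ≤ k := by positivity
  have h1 : 0 < Real.Gamma ((k : ℝ) + 3 / 2) := Gamma_pos_of_pos (by linarith)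
  have h2 : 0 < Real.Gamma ((k : ℝ) + ν + 3 / 2) := Gamma_pos_of_pos (by linarith)
  unfold struveCoeff
  positivity

theorem struveCoeff_rec {ν : ℝ} (hν : ν > -1/2) (k : ℕ) :
    struveCoeff ν k = (2 * k + 3) * (2 * k + 2 + 2 * (ν + 1 / 2)) * struveCoeff ν (k + 1) := by
  have hk : (0 : ℝ) ≤ k := by positivity
  have p1 : (0 : ℝ) < k + 3 / 2 := by linarith
  have p2 : (0 : ℝ) < k + ν + 3 / 2 := by linarith
  have h1 : 0 < Real.Gamma ((k : ℝ) + 3 / 2) := Gamma_pos_of_pos p1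
  have h2 : 0 < Real.Gamma ((k : ℝ) + ν + 3 / 2) := Gamma_pos_of_pos p2
  unfold struveCoeff
  push_cast
  rw [show (k : ℝ) + 1 + 3 / 2 = (k + 3 / 2) + 1 by ring,
    show (k : ℝ) + 1 + ν + 3 / 2 = (k + ν + 3 / 2) + 1 by ring, Gamma_add_one p1.ne',
    Gamma_add_one p2.ne', show ν + 2 * ((k : ℝ) + 1) + 1 = (ν + 2 * k + 1) + 1 + 1 by ring,
    rpow_add_one (by norm_num : (1 / 2 : ℝ) ≠ 0) (ν + 2 * k + 1 + 1),
    rpow_add_one (by norm_num : (1 / 2 : ℝ) ≠ 0) (ν + 2 * k + 1)]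
  generalize (1 / 2 : ℝ) ^ (ν + 2 * (k : ℝ) + 1) = t
  generalize Real.Gamma ((k : ℝ) + 3 / 2) = g₁ at *
  generalize Real.Gamma ((k : ℝ) + ν + 3 / 2) = g₂ at *
  have e : (2 * (k : ℝ) + 3) * (2 * k + 2 + 2 * (ν + 1 / 2)) =
      4 * ((k + 3 / 2) * (k + ν + 3 / 2)) := by ring
  rw [e]
  generalize (k : ℝ) + 3 / 2 = m at *
  generalize (k : ℝ) + ν + 3 / 2 = n at *
  field_simp
  norm_num

theorem struve_eq (ν : ℝ) {u : ℝ} (hu : 0 < u) :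
    u ^ ν * struveL ν u = hh (ν + 1 / 2) (struveCoeff ν) u := by
  rw [struveL, hh, ← tsum_mul_left, ← tsum_mul_left]
  congr 1
  ext k
  have e : u ^ ν * u ^ (ν + 2 * (k : ℝ) + 1) = u ^ (2 * (ν + 1 / 2)) * u ^ (2 * k) := by
    rw [← rpow_add hu, ← rpow_natCast u (2 * k), ← rpow_add hu]
    congr 1
    push_cast
    ring
  rw [struveCoeff, div_eq_mul_one_div u 2, mul_rpow hu.le (by norm_num)]
  linear_combination (1 / 2 : ℝ) ^ (ν + 2 * (k : ℝ) + 1) /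
    (Real.Gamma ((k : ℝ) + 3 / 2) * Real.Gamma ((k : ℝ) + ν + 3 / 2)) * e

theorem stmt19 (ν β : ℝ) (hν : ν > -1/2) (hβ1 : 0 < β) (hβ2 : β < 1) :
    ∀ x : ℝ, 0 < x →
      ∫ u in (0:ℝ)..x, Real.exp (-β * u) * u ^ ν * struveL ν u <
        (if ν ≥ 1/2 then 2 * (ν + 1) else 2 * ν + 3 + Real.sqrt (2 * (2 * ν + 3))) /
            ((2 * ν + 1) * (1 - β)) *
          (Real.exp (-β * x) * x ^ ν * struveL ν x) := by
  intro x hx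
  have ha : 0 < ν + 1 / 2 := by linarith
  have hc := struveCoeff_pos hν
  have hrec := struveCoeff_rec hν
  have hγ : 0 < 1 - β := by linarith
  have h2ν : 0 < 2 * ν + 1 := by linarith
  have hpos : 0 < exp (-β * x) * hh (ν + 1 / 2) (struveCoeff ν) x :=
    mul_pos (exp_pos _) (hh_pos ha hc hrec hx)
  have hI : ∫ u in (0:ℝ)..x, Real.exp (-β * u) * u ^ ν * struveL ν u =
      ∫ u in (0:ℝ)..x, exp (-β * u) * hh (ν + 1 / 2) (struveCoeff ν) u := by
    refine intervalIntegral.integral_congr_ae (Filter.Eventually.of_forall fun u hu => ?_)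
    rw [Set.uIoc_of_le hx.le] at hu
    rw [mul_assoc, struve_eq ν hu.1]
  rw [hI, mul_assoc (exp (-β * x)), struve_eq ν hx]
  split_ifs with h
  · refine (integral_le ha hc hrec le_rfl one_pos hβ2
      (fun y hy => ratio_large (by linarith) hc hrec hy) hx).trans_lt ?_
    refine mul_lt_mul_of_pos_right ?_ hpos
    rw [div_lt_div_iff₀ (by nlinarith) (by positivity)]
    nlinarith
  · refine (integral_le ha hc hrec (q := 1 - (ν + 1 / 2) / 2) (by linarith) (by linarith) hβ2
      (fun y hy => ratio_small ha (by linarith) hc hrec hy) hx).trans_lt ?_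
    refine mul_lt_mul_of_pos_right ?_ hpos
    -- `1 / (1 - q) = 4 / (2 ν + 1)`, and `4 < 2 ν + 3 + √(2 (2 ν + 3))`.
    have hs : 2 < Real.sqrt (2 * (2 * ν + 3)) := by
      rw [Real.lt_sqrt (by norm_num)]; linarith
    rw [show 1 / ((1 - (1 - (ν + 1 / 2) / 2)) * (1 - β)) = 4 / ((2 * ν + 1) * (1 - β)) by
      rw [div_eq_div_iff (by
        have : 0 < (1 - (1 - (ν + 1 / 2) / 2)) := by linarith
        positivity) (by positivity)]; ring]
    gcongr
    linarith
end
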